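/- arXiv:2305.13730 — 2 statements merged into one kernel-verified Lean document; each statement's English description precedes it below -/
import Mathlib

section
/- Let n ≥ 3 and r ≥ 3 be integers. There exists a constant c > 0 such that for every odd prime power q and every T ∈ M_n(𝔽_q), the matrix sphere σ_T ⊆ (M_n(𝔽_q))^r satisfies |#σ_T − q^{n²(r−1)}| ≤ c·q^{(r−1)n² − (n−1)(r−2)}; in particular #σ_T ∼ q^{n²(r−1)} as q → ∞. -/
open scoped BigOperators

/-- The additive character `ψ(X) = exp((2πi/p)·Tr_{F/F_p}(Tr X))` on `n × n` matrices
over a finite field `F` of characteristic `p`. -/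
noncomputable def psi (F : Type) [Field F] [Fintype F] {n : ℕ}
    (X : Matrix (Fin n) (Fin n) F) : ℂ :=
  letI : Algebra (ZMod (ringChar F)) F := ZMod.algebra _ _
  Complex.exp (2 * Real.pi * Complex.I *
    (((Algebra.trace (ZMod (ringChar F)) F X.trace).val : ℂ) / (ringChar F : ℂ)))

/-- The radical `{X : Tr(A(XY+YX)) = 0 for all Y}` of the quadratic form
`X ↦ Tr(AX²)` on `M_n(F)`. -/
def radical (F : Type) [Field F] [Fintype F] {n : ℕ}
    (A : Matrix (Fin n) (Fin n) F) : Submodule F (Matrix (Fin n) (Fin n) F) where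
  carrier := {X : Matrix (Fin n) (Fin n) F |
    ∀ Y : Matrix (Fin n) (Fin n) F, (A * (X * Y + Y * X)).trace = 0}
  zero_mem' := by intro Y; simp
  add_mem' := by
    intro X₁ X₂ h₁ h₂ Y
    have e : A * ((X₁ + X₂) * Y + Y * (X₁ + X₂))
        = A * (X₁ * Y + Y * X₁) + A * (X₂ * Y + Y * X₂) := by noncomm_ring
    show (A * ((X₁ + X₂) * Y + Y * (X₁ + X₂))).trace = 0
    rw [e, Matrix.trace_add, h₁ Y, h₂ Y, add_zero]
  smul_mem' := by
    intro c X h Y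
    have e : A * ((c • X) * Y + Y * (c • X)) = c • (A * (X * Y + Y * X)) := by
      rw [smul_mul_assoc, Matrix.mul_smul, ← smul_add, Matrix.mul_smul]
    show (A * ((c • X) * Y + Y * (c • X))).trace = 0
    rw [e, Matrix.trace_smul, h Y, smul_zero]

/-- The radical invariant `ρ_A`: the `F`-dimension of the radical of `X ↦ Tr(AX²)`. -/
noncomputable def rho (F : Type) [Field F] [Fintype F] {n : ℕ}
    (A : Matrix (Fin n) (Fin n) F) : ℕ :=
  Module.finrank F (radical F A)

/-- The quadratic matrix Gauss sum `G(A,B) = Σ_X ψ(AX² + BX)`. -/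
noncomputable def matGaussSum (F : Type) [Field F] [Fintype F] {n : ℕ}
    (A B : Matrix (Fin n) (Fin n) F) : ℂ :=
  ∑ X : Matrix (Fin n) (Fin n) F, psi F (A * X ^ 2 + B * X)

/-- The matrix sphere `σ_T = {X ∈ M_n(F)^r : X₁² + ⋯ + X_r² = T}`. -/
def matSphere (F : Type) [Field F] [Fintype F] [DecidableEq F] {n : ℕ} (r : ℕ)
    (T : Matrix (Fin n) (Fin n) F) : Finset (Fin r → Matrix (Fin n) (Fin n) F) :=
  Finset.univ.filter (fun X => ∑ i, (X i) ^ 2 = T)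

/-- The Fourier transform `f̂(M) = q^{-rn²} Σ_A f(A) conj(ψ(M·A))` on `M_n(F)^r`. -/
noncomputable def matFourier (F : Type) [Field F] [Fintype F] {n r : ℕ}
    (f : (Fin r → Matrix (Fin n) (Fin n) F) → ℂ)
    (M : Fin r → Matrix (Fin n) (Fin n) F) : ℂ :=
  ((Fintype.card F : ℂ) ^ (r * n ^ 2))⁻¹ *
    ∑ A : Fin r → Matrix (Fin n) (Fin n) F, f A * (starRingEnd ℂ) (psi F (∑ i, M i * A i))


namespace MS
open Polynomial

variable {F : Type} [Field F]

theorem struct_thm {n : ℕ} (A : Matrix (Fin n) (Fin n) F) :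
    ∃ I : Fin n → Ideal F[X], (∀ p : F[X], aeval A p = 0 → ∀ i, p ∈ I i) ∧
      ∃ e : (Fin n → F) ≃ₗ[F] (∀ i, F[X] ⧸ I i), ∀ v, e (A.mulVec v) = (X : F[X]) • e v := by
  classical
  let φ : Module.End F (Fin n → F) := Matrix.toLin' A
  let M := Module.AEval' φ
  let b : Module.Basis (Fin n) F[X] (Fin n → F[X]) := Pi.basisFun F[X] (Fin n)
  let π : (Fin n → F[X]) →ₗ[F[X]] M :=
    b.constr F[X] (fun i => Module.AEval'.of φ (Pi.single i 1))
  have hann : ∀ p : F[X], aeval A p = 0 → ∀ m : M, p • m = 0 := by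
    intro p hp m
    obtain ⟨v, rfl⟩ := (Module.AEval'.of φ).surjective m
    have h1 : aeval φ p = 0 := by
      have : φ = Matrix.toLinAlgEquiv' A := rfl
      rw [this, aeval_algHom_apply, hp, map_zero]
    have h2 : p • (Module.AEval'.of φ v) = Module.AEval'.of φ (aeval φ p • v) := rfl
    rw [h2, h1]; simp
  have hsurj : Function.Surjective π := by
    intro m
    obtain ⟨v, rfl⟩ := (Module.AEval'.of φ).surjective m
    refine ⟨fun i => C (v i), ?_⟩
    simp only [π, Module.Basis.constr_apply_fintype]
    have : v = ∑ i, v i • (Pi.single i 1 : Fin n → F) := by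
      ext j; simp [Finset.sum_apply, Pi.single_apply]
    conv_rhs => rw [this]
    rw [map_sum]
    refine Finset.sum_congr rfl fun i _ => ?_
    rw [map_smul]
    exact Module.AEval.C_smul (a := φ) (v i) _
  have hrank : Module.finrank F[X] (LinearMap.ker π) = Module.finrank F[X] (Fin n → F[X]) := by
    refine le_antisymm (Submodule.finrank_le _) ?_
    refine LinearMap.finrank_le_finrank_of_injective
      (f := (LinearMap.lsmul F[X] (Fin n → F[X]) A.charpoly).codRestrict (LinearMap.ker π) ?_) ?_
    · intro x
      simp only [LinearMap.lsmul_apply, LinearMap.mem_ker, map_smul]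
      exact hann _ (Matrix.aeval_self_charpoly A) _
    · exact (LinearMap.lsmul_injective (Matrix.charpoly_monic A).ne_zero).codRestrict _
  let e1 := Submodule.quotientEquivPiSpan (LinearMap.ker π) b hrank
  let e2 := π.quotKerEquivOfSurjective hsurj
  let e3 : M ≃ₗ[F[X]] _ := e2.symm.trans e1
  refine ⟨fun i => Ideal.span {Submodule.smithNormalFormCoeffs b hrank i}, ?_, ?_⟩
  · intro p hp i
    have h1 : ∀ y, p • (e3 y) = 0 := by
      intro y; rw [← map_smul, hann p hp, map_zero]
    have h2 := h1 (e3.symm (fun _ => 1))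
    rw [LinearEquiv.apply_symm_apply] at h2
    have h3 := congrFun h2 i
    rw [← Ideal.Quotient.eq_zero_iff_mem]
    have h4 : Ideal.Quotient.mk (Ideal.span {Submodule.smithNormalFormCoeffs b hrank i})
      (p * 1) = 0 := h3
    rw [mul_one] at h4
    exact h4
  · refine ⟨(Module.AEval'.of φ).trans (e3.restrictScalars F), ?_⟩
    intro v
    have : Module.AEval'.of φ (A.mulVec v) = (X : F[X]) • Module.AEval'.of φ v := by
      rw [Module.AEval'.X_smul_of]; rfl
    simp only [LinearEquiv.trans_apply, LinearEquiv.restrictScalars_apply]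
    rw [this, map_smul]

/-- choice of type -/
noncomputable def ty {n : ℕ} (A : Matrix (Fin n) (Fin n) F) : Fin n → Ideal F[X] :=
  (struct_thm A).choose

theorem ty_mem {n : ℕ} (A : Matrix (Fin n) (Fin n) F) (p : F[X]) (h : aeval A p = 0) (i) :
    p ∈ ty A i := (struct_thm A).choose_spec.1 p h i

theorem ty_equiv {n : ℕ} (A : Matrix (Fin n) (Fin n) F) :
    ∃ e : (Fin n → F) ≃ₗ[F] (∀ i, F[X] ⧸ ty A i), ∀ v, e (A.mulVec v) = (X : F[X]) • e v :=
  (struct_thm A).choose_spec.2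

/-- linear automorphism to unit matrix -/
theorem unit_of_equiv {n : ℕ} (A B : Matrix (Fin n) (Fin n) F)
    (e : (Fin n → F) ≃ₗ[F] (Fin n → F)) (h : ∀ v, e (A.mulVec v) = B.mulVec (e v)) :
    ∃ g : (Matrix (Fin n) (Fin n) F)ˣ, (g : Matrix (Fin n) (Fin n) F) * A = B * g := by
  classical
  refine ⟨⟨LinearMap.toMatrix' e.toLinearMap, LinearMap.toMatrix' e.symm.toLinearMap, ?_, ?_⟩, ?_⟩
  · rw [← LinearMap.toMatrix'_comp]; simp
  · rw [← LinearMap.toMatrix'_comp]; simp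
  · apply Matrix.toLin'.injective
    refine LinearMap.ext fun v => ?_
    simp only [Matrix.toLin'_mul, Matrix.toLin'_toMatrix']
    simp [h]

theorem similar_of_ty_eq {n : ℕ} {A B : Matrix (Fin n) (Fin n) F} (h : ty A = ty B) :
    ∃ g : (Matrix (Fin n) (Fin n) F)ˣ, (g : Matrix (Fin n) (Fin n) F) * A = B * g := by
  have h1 := ty_equiv A
  rw [h] at h1
  obtain ⟨e, he⟩ := h1
  obtain ⟨f, hf⟩ := ty_equiv B
  refine unit_of_equiv A B (e.trans f.symm) fun v => ?_
  apply f.injective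
  simp [he, hf]

theorem card_ideals_le (p : F[X]) (hp : p ≠ 0) :
    {I : Ideal F[X] | p ∈ I}.Finite ∧ {I : Ideal F[X] | p ∈ I}.ncard ≤ 2 ^ p.natDegree := by
  classical
  open UniqueFactorizationMonoid in
  let S : Finset (Multiset F[X]) := (normalizedFactors p).powerset.toFinset
  have hS : S.card ≤ 2 ^ p.natDegree := by
    refine (Multiset.toFinset_card_le _).trans ?_
    rw [Multiset.card_powerset]
    refine Nat.pow_le_pow_right (by norm_num) ?_
    have h1 : p.natDegree = ((UniqueFactorizationMonoid.normalizedFactors p).prod).natDegree :=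
      natDegree_eq_of_degree_eq (degree_eq_degree_of_associated
        (UniqueFactorizationMonoid.prod_normalizedFactors hp).symm)
    rw [h1, natDegree_multiset_prod]
    · have := Multiset.card_nsmul_le_sum (s := (UniqueFactorizationMonoid.normalizedFactors p).map natDegree) (a := 1) ?_
      · simpa using this
      · intro x hx
        obtain ⟨y, hy, rfl⟩ := Multiset.mem_map.1 hx
        exact (UniqueFactorizationMonoid.irreducible_of_normalized_factor y hy).natDegree_pos
    · exact UniqueFactorizationMonoid.zero_notMem_normalizedFactors p
  have hsub : {I : Ideal F[X] | p ∈ I} ⊆ Set.image (fun s : Multiset F[X] => Ideal.span {s.prod}) (S : Set (Multiset F[X])) := by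
    intro I hI
    obtain ⟨d, hd⟩ := IsPrincipalIdealRing.principal I
    have hd' : I = Ideal.span {d} := hd
    have hdp : d ∣ p := by
      have : p ∈ I := hI
      rwa [hd', Ideal.mem_span_singleton] at this
    have hd0 : d ≠ 0 := ne_zero_of_dvd_ne_zero hp hdp
    refine ⟨UniqueFactorizationMonoid.normalizedFactors d, ?_, ?_⟩
    · simp only [S, Finset.mem_coe, Multiset.mem_toFinset, Multiset.mem_powerset]
      exact (UniqueFactorizationMonoid.dvd_iff_normalizedFactors_le_normalizedFactors hd0 hp).1 hdp
    · rw [hd']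
      exact Ideal.span_singleton_eq_span_singleton.2
        (UniqueFactorizationMonoid.prod_normalizedFactors hd0)
  have hfin : (Set.image (fun s : Multiset F[X] => Ideal.span {s.prod}) (S : Set (Multiset F[X]))).Finite :=
    (Finset.finite_toSet S).image _
  refine ⟨hfin.subset hsub, (Set.ncard_le_ncard hsub hfin).trans ?_⟩
  refine (Set.ncard_image_le (Finset.finite_toSet S)).trans ?_
  rwa [Set.ncard_coe_finset]

end MS


namespace MS
open Polynomial

variable {F : Type} [Field F]

theorem twist_similar {n : ℕ} (A : Matrix (Fin n) (Fin n) F)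
    (h : ∀ i, ∀ p ∈ ty A i, p.comp (-X) ∈ ty A i) :
    ∃ g : (Matrix (Fin n) (Fin n) F)ˣ, (g : Matrix (Fin n) (Fin n) F) * A = (-A) * g := by
  obtain ⟨e, he⟩ := ty_equiv A
  let τ : F[X] →ₐ[F] F[X] := aeval (-X)
  have hτ : ∀ p, τ p = p.comp (-X) := fun p => (aeval_def _ _).trans rfl
  have hττ : ∀ p, τ (τ p) = p := by
    intro p; rw [hτ, hτ, comp_assoc]; simp
  have hle : ∀ i, ty A i ≤ (ty A i).comap τ := by
    intro i p hp
    rw [Ideal.mem_comap, hτ]; exact h i p hp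
  let θ : ∀ i, (F[X] ⧸ ty A i) →ₗ[F] (F[X] ⧸ ty A i) := fun i =>
    (Ideal.quotientMapₐ (ty A i) τ (hle i)).toLinearMap
  have hθ : ∀ i p, θ i (Ideal.Quotient.mk _ p) = Ideal.Quotient.mk _ (τ p) := fun i p => rfl
  have hθθ : ∀ i, Function.Involutive (θ i) := by
    intro i x
    obtain ⟨p, rfl⟩ := Ideal.Quotient.mk_surjective x
    rw [hθ, hθ, hττ]
  have hθX : ∀ i x, θ i ((X : F[X]) • x) = - ((X : F[X]) • θ i x) := by
    intro i x
    obtain ⟨p, rfl⟩ := Ideal.Quotient.mk_surjective x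
    have h1 : (X : F[X]) • (Ideal.Quotient.mk (ty A i) p) = Ideal.Quotient.mk (ty A i) (X * p) := rfl
    have h2 : (X : F[X]) • (Ideal.Quotient.mk (ty A i) (τ p)) = Ideal.Quotient.mk (ty A i) (X * τ p) := rfl
    rw [h1, hθ, hθ, h2, map_mul, ← map_neg]
    simp [τ]
  let Θ : (∀ i, F[X] ⧸ ty A i) ≃ₗ[F] (∀ i, F[X] ⧸ ty A i) :=
    LinearEquiv.piCongrRight fun i => LinearEquiv.ofInvolutive (θ i) (hθθ i)
  refine unit_of_equiv A (-A) ((e.trans Θ).trans e.symm) fun v => ?_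
  apply e.injective
  rw [Matrix.neg_mulVec, map_neg, he]
  simp only [LinearEquiv.trans_apply, LinearEquiv.apply_symm_apply, he]
  funext i
  exact hθX i _

section
variable {ι : Type} [Fintype ι] [DecidableEq ι]

/-- solutions of `A X = ε X A` -/
def cm (ε : F) (A : Matrix ι ι F) : Submodule F (Matrix ι ι F) :=
  LinearMap.ker (LinearMap.mulLeft F A - ε • LinearMap.mulRight F A)

theorem mem_cm {ε : F} {A X : Matrix ι ι F} : X ∈ cm ε A ↔ A * X = ε • (X * A) := by
  simp [cm, sub_eq_zero]

theorem mem_cm_one {A X : Matrix ι ι F} : X ∈ cm 1 A ↔ A * X = X * A := by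
  simp [mem_cm]

theorem mem_cm_neg {A X : Matrix ι ι F} : X ∈ cm (-1) A ↔ A * X = -(X * A) := by
  simp [mem_cm]

/-- dimension of the solution space -/
noncomputable def dm (ε : F) (A : Matrix ι ι F) : ℕ := Module.finrank F (cm ε A)

theorem dm_le (ε : F) (A : Matrix ι ι F) : dm ε A ≤ Fintype.card ι ^ 2 := by
  refine (Submodule.finrank_le _).trans ?_
  rw [Module.finrank_matrix, Module.finrank_self, mul_one, sq]

/-- intertwiners: if g A = δ A h -/
theorem dm_conj (ε : F) (A B : Matrix ι ι F) (g : (Matrix ι ι F)ˣ)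
    (h : (g : Matrix ι ι F) * A = B * g) : dm ε A = dm ε B := by
  have key : ∀ (A B : Matrix ι ι F) (g : (Matrix ι ι F)ˣ),
    (g : Matrix ι ι F) * A = B * g → dm ε A ≤ dm ε B := by
    intro A B g h
    let f : Matrix ι ι F →ₗ[F] Matrix ι ι F :=
      (LinearMap.mulLeft F (g : Matrix ι ι F)) ∘ₗ (LinearMap.mulRight F ((g⁻¹ : (Matrix ι ι F)ˣ) : Matrix ι ι F))
    have hf : ∀ X, f X = g * (X * ((g⁻¹ : (Matrix ι ι F)ˣ) : Matrix ι ι F)) := fun X => rfl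
    refine LinearMap.finrank_le_finrank_of_injective (f := f.restrict (p := cm ε A) (q := cm ε B) ?_) ?_
    · intro X hX
      rw [mem_cm] at hX ⊢
      have hB : B = g * A * ((g⁻¹ : (Matrix ι ι F)ˣ) : Matrix ι ι F) := by rw [h]; simp [mul_assoc]
      rw [hf, hB]
      have : A * X * ((g⁻¹ : (Matrix ι ι F)ˣ) : Matrix ι ι F) = (ε • (X * A)) * ((g⁻¹ : (Matrix ι ι F)ˣ) : Matrix ι ι F) := by rw [hX]
      simp only [mul_assoc, Units.inv_mul_cancel_left, smul_mul_assoc] at this ⊢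
      rw [this]; simp
    · intro X Y hXY
      have h1 : f X = f Y := congrArg Subtype.val hXY
      rw [hf, hf] at h1
      apply Subtype.ext
      exact (Units.mul_left_inj g⁻¹).1 ((Units.mul_right_inj g).1 h1)
  refine le_antisymm (key A B g h) (key B A g⁻¹ ?_)
  rw [Units.inv_mul_eq_iff_eq_mul, ← mul_assoc, h]; simp

theorem dm_neg_eq_of_similar (A : Matrix ι ι F) (g : (Matrix ι ι F)ˣ)
    (h : (g : Matrix ι ι F) * A = (-A) * g) : dm (-1) A = dm 1 A := by
  have key : ∀ (ε : F), ε * ε = 1 → dm ε A ≤ dm (-ε) A := by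
    intro ε hε
    refine LinearMap.finrank_le_finrank_of_injective
      (f := (LinearMap.mulLeft F (g : Matrix ι ι F)).restrict (p := cm ε A) (q := cm (-ε) A) ?_) ?_
    · intro X hX
      rw [mem_cm] at hX ⊢
      simp only [LinearMap.mulLeft_apply]
      have h' : A * g = - (g * A) := by rw [h]; simp
      rw [← mul_assoc, h', mul_assoc, neg_smul, neg_mul, mul_assoc, hX]
      simp
    · intro X Y hXY
      have h1 : (g : Matrix ι ι F) * X = g * Y := congrArg Subtype.val hXY
      apply Subtype.ext
      simpa using h1
  refine le_antisymm ?_ (key 1 (by simp))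
  simpa using key (-1) (by simp)

theorem card_cm [Fintype F] (ε : F) (A : Matrix ι ι F) : Nat.card (cm ε A) = Fintype.card F ^ dm ε A := by
  rw [← Nat.card_eq_fintype_card]
  exact Module.natCard_eq_pow_finrank

end

theorem le_dm_one {n : ℕ} (A : Matrix (Fin n) (Fin n) F) : n ≤ dm 1 A := by
  obtain ⟨e, he⟩ := ty_equiv A
  have hs1 : ∀ (c : F) (x y : ∀ i, F[X] ⧸ ty A i), (c • x) * y = c • (x * y) := by
    intro c x y
    funext i
    obtain ⟨p, hp⟩ := Ideal.Quotient.mk_surjective (x i)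
    obtain ⟨r, hr⟩ := Ideal.Quotient.mk_surjective (y i)
    simp only [Pi.mul_apply, Pi.smul_apply, ← hp, ← hr]
    show Ideal.Quotient.mk (ty A i) ((c • p) * r) = Ideal.Quotient.mk (ty A i) (c • (p * r))
    rw [smul_mul_assoc]
  have hs2 : ∀ (x y : ∀ i, F[X] ⧸ ty A i), (X : F[X]) • (x * y) = x * ((X : F[X]) • y) := by
    intro x y
    funext i
    obtain ⟨p, hp⟩ := Ideal.Quotient.mk_surjective (x i)
    obtain ⟨r, hr⟩ := Ideal.Quotient.mk_surjective (y i)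
    simp only [Pi.mul_apply, Pi.smul_apply, ← hp, ← hr]
    show Ideal.Quotient.mk (ty A i) (X * (p * r)) = Ideal.Quotient.mk (ty A i) (p * (X * r))
    rw [mul_left_comm]
  let L : (Fin n → F) →ₗ[F] Matrix (Fin n) (Fin n) F :=
    LinearMap.toMatrix'.toLinearMap ∘ₗ
      { toFun := fun v => e.symm.toLinearMap ∘ₗ (LinearMap.mulLeft F (e v)) ∘ₗ e.toLinearMap
        map_add' := by intro v w; ext; simp [add_mul]
        map_smul' := by intro c v; ext; simp [hs1] }
  have hL : ∀ v w, (L v).mulVec w = e.symm (e v * e w) := by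
    intro v w
    rw [← Matrix.toLin'_apply]
    simp [L]
  have h1 : Module.finrank F (Fin n → F) ≤ dm 1 A := by
    refine LinearMap.finrank_le_finrank_of_injective (f := L.codRestrict (cm 1 A) ?_) ?_
    · intro v
      rw [mem_cm_one]
      apply Matrix.toLin'.injective
      refine LinearMap.ext fun w => ?_
      simp only [Matrix.toLin'_mul, LinearMap.comp_apply, Matrix.toLin'_apply]
      apply e.injective
      rw [he, hL, hL, he]
      simp only [LinearEquiv.apply_symm_apply]
      exact hs2 _ _
    · intro v w hvw
      have h2 : L v = L w := congrArg Subtype.val hvw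
      have h3 := congrArg (fun Z => Matrix.mulVec Z (e.symm 1)) h2
      simp only [hL] at h3
      simpa using h3
  simpa using h1

theorem stable_of_X_pow {I : Ideal F[X]} {k : ℕ} (h : (X : F[X]) ^ k ∈ I) (p : F[X]) (hp : p ∈ I) :
    p.comp (-X) ∈ I := by
  obtain ⟨d, hd⟩ := IsPrincipalIdealRing.principal I
  have hd' : I = Ideal.span {d} := hd
  rw [hd', Ideal.mem_span_singleton] at h
  obtain ⟨i, _, hi⟩ := (dvd_prime_pow prime_X k).1 h
  have hI : I = Ideal.span {X ^ i} := by
    rw [hd']; exact Ideal.span_singleton_eq_span_singleton.2 hi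
  rw [hI, Ideal.mem_span_singleton] at hp ⊢
  obtain ⟨r, rfl⟩ := hp
  rw [mul_comp]
  refine Dvd.dvd.mul_right ?_ _
  rw [X_pow_comp, neg_pow]
  exact Dvd.intro_left _ rfl

theorem stable_of_irred {I : Ideal F[X]} {c : F} (hc : ¬ IsSquare c) (h : (X : F[X]) ^ 2 - C c ∈ I)
    (p : F[X]) (hp : p ∈ I) : p.comp (-X) ∈ I := by
  have hirr : Irreducible ((X : F[X]) ^ 2 - C c) := by
    refine (X_pow_sub_C_irreducible_iff_of_prime Nat.prime_two).2 ?_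
    intro b hb
    exact hc ⟨b, by rw [← hb, sq]⟩
  obtain ⟨d, hd⟩ := IsPrincipalIdealRing.principal I
  have hd' : I = Ideal.span {d} := hd
  rw [hd', Ideal.mem_span_singleton] at h
  rcases (hirr.dvd_iff).1 h with hu | ha
  · have : I = ⊤ := by rw [hd']; exact Ideal.span_singleton_eq_top.2 hu
    rw [this]; trivial
  · have hI : I = Ideal.span {(X : F[X]) ^ 2 - C c} := by
      rw [hd']; exact Ideal.span_singleton_eq_span_singleton.2 ha.symm
    rw [hI, Ideal.mem_span_singleton] at hp ⊢
    obtain ⟨r, rfl⟩ := hp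
    rw [mul_comp]
    refine Dvd.dvd.mul_right ?_ _
    simp

theorem dm_neg_eq_of_nilpotent {n : ℕ} (A : Matrix (Fin n) (Fin n) F) (h : A ^ n = 0) :
    dm (-1) A = dm 1 A := by
  obtain ⟨g, hg⟩ := twist_similar A fun i p hp =>
    stable_of_X_pow (ty_mem A (X ^ n) (by simpa using h) i) p hp
  exact dm_neg_eq_of_similar A g hg

theorem dm_neg_eq_of_sq {n : ℕ} (A : Matrix (Fin n) (Fin n) F) (c : F) (hc : ¬ IsSquare c)
    (h : A ^ 2 = c • 1) :
    dm (-1) A = dm 1 A := by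
  obtain ⟨g, hg⟩ := twist_similar A fun i p hp =>
    stable_of_irred hc (ty_mem A (X ^ 2 - C c) (by simp [h, Algebra.algebraMap_eq_smul_one]) i) p hp
  exact dm_neg_eq_of_similar A g hg

end MS


namespace MS
open Polynomial

variable {F : Type} [Field F]

theorem dm_nonscalar {n : ℕ} (A : Matrix (Fin n) (Fin n) F) (hA : ∀ a : F, A ≠ a • 1)
    (ε : F) (hε : ε ≠ 0) : dm ε A + 2 * n ≤ n ^ 2 + 2 := by
  classical
  have hex : ∃ v : Fin n → F, LinearIndependent F ![v, A.mulVec v] := by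
    by_contra hcon
    push Not at hcon
    obtain ⟨a, ha⟩ := LinearMap.exists_eq_smul_id_of_forall_notLinearIndependent
      (f := Matrix.toLin' A) (fun v => by simpa using hcon v)
    apply hA a
    apply Matrix.toLin'.injective
    rw [ha]; simp
    rfl
  obtain ⟨v, hv⟩ := hex
  set u := A.mulVec v with hu
  let S : Submodule F (Fin n → F) := Submodule.span F (Set.range ![v, u])
  have hS : Module.finrank F S = 2 := by
    simpa using finrank_span_eq_card hv
  obtain ⟨W, hW⟩ := Submodule.exists_isCompl S
  have hfW := Submodule.finrank_add_eq_of_isCompl hW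
  have hv0 : v ≠ 0 := hv.ne_zero 0
  let L : Submodule F (Fin n → F) := Submodule.span F {v}
  have hL : Module.finrank F L = 1 := finrank_span_singleton hv0
  have hLq := Submodule.finrank_quotient_add_finrank L
  let Ψ : Matrix (Fin n) (Fin n) F →ₗ[F] (Fin n → F) × (W →ₗ[F] ((Fin n → F) ⧸ L)) :=
    { toFun := fun X => (X.mulVec v, L.mkQ ∘ₗ (Matrix.toLin' X) ∘ₗ W.subtype)
      map_add' := by
        intro X Y
        ext <;> simp [Matrix.add_mulVec]
      map_smul' := by
        intro X Y
        ext <;> simp [Matrix.smul_mulVec] }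
  have hinj : Function.Injective (Ψ ∘ₗ (cm ε A).subtype) := by
    rw [← LinearMap.ker_eq_bot, LinearMap.ker_eq_bot']
    rintro ⟨X, hX⟩ hΨ
    rw [mem_cm] at hX
    have h1 : X.mulVec v = 0 := congrArg Prod.fst hΨ
    have h2 : L.mkQ ∘ₗ (Matrix.toLin' X) ∘ₗ W.subtype = 0 := congrArg Prod.snd hΨ
    have hcomm : ∀ w, A.mulVec (X.mulVec w) = ε • X.mulVec (A.mulVec w) := by
      intro w
      rw [Matrix.mulVec_mulVec, hX, Matrix.smul_mulVec, Matrix.mulVec_mulVec]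
    have h3 : X.mulVec u = 0 := by
      have := hcomm v
      rw [h1, Matrix.mulVec_zero] at this
      exact (smul_eq_zero.1 this.symm).resolve_left hε
    have h4 : ∀ w, X.mulVec w ∈ L := by
      have h5 : S ≤ L.comap (Matrix.toLin' X) := by
        refine Submodule.span_le.2 ?_
        rintro _ ⟨i, rfl⟩
        fin_cases i <;> simp [h1, h3]
      have h6 : W ≤ L.comap (Matrix.toLin' X) := by
        intro w hw
        have := LinearMap.congr_fun h2 ⟨w, hw⟩
        simpa using this
      intro w
      have h7 : (⊤ : Submodule F (Fin n → F)) ≤ L.comap (Matrix.toLin' X) := by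
        rw [← hW.sup_eq_top]; exact sup_le h5 h6
      simpa using h7 (Submodule.mem_top (x := w))
    apply Subtype.ext
    show X = 0
    apply Matrix.toLin'.injective
    refine LinearMap.ext fun w => ?_
    simp only [Matrix.toLin'_apply, map_zero, LinearMap.zero_apply]
    obtain ⟨a, ha⟩ := Submodule.mem_span_singleton.1 (h4 w)
    obtain ⟨b, hb⟩ := Submodule.mem_span_singleton.1 (h4 (A.mulVec w))
    have h8 := hcomm w
    rw [← ha, ← hb, Matrix.mulVec_smul, ← hu, smul_smul] at h8
    have h9 := LinearIndependent.pair_iff.1 hv (-(ε * b)) a (by rw [h8]; simp)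
    rw [← ha, h9.2, zero_smul]
  have hle := LinearMap.finrank_le_finrank_of_injective hinj
  rw [Module.finrank_prod, Module.finrank_linearMap] at hle
  simp only [Module.finrank_fin_fun] at hle hfW hLq
  change dm ε A ≤ _ at hle
  rw [hS] at hfW
  rw [hL] at hLq
  set a := Module.finrank F W
  set b := Module.finrank F ((Fin n → F) ⧸ L)
  have hb : b = a + 1 := by omega
  rw [hb] at hle
  have key : ∀ d n a : ℕ, d ≤ n + a * (a + 1) → 2 + a = n → d + 2 * n ≤ n ^ 2 + 2 := by
    rintro d _ a h rfl; nlinarith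
  exact key _ _ _ hle hfW

theorem dm_neg_scalar {n : ℕ} (h2 : (2 : F) ≠ 0) (a : F) (ha : a ≠ 0) :
    dm (-1) (a • (1 : Matrix (Fin n) (Fin n) F)) = 0 := by
  have : cm (-1) (a • (1 : Matrix (Fin n) (Fin n) F)) = ⊥ := by
    rw [eq_bot_iff]
    intro X hX
    rw [mem_cm_neg] at hX
    simp only [smul_mul_assoc, one_mul, mul_smul_comm, mul_one] at hX
    rw [eq_neg_iff_add_eq_zero, ← two_smul F, smul_smul] at hX
    simpa [h2, ha] using hX
  rw [dm, this, finrank_bot]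

theorem dm_neg_le {n : ℕ} (h2 : (2 : F) ≠ 0) (A : Matrix (Fin n) (Fin n) F) (hA : A ≠ 0) :
    dm (-1) A + 2 * n ≤ n ^ 2 + 2 := by
  by_cases h : ∀ a : F, A ≠ a • 1
  · exact dm_nonscalar A h (-1) (by simp)
  · push Not at h
    obtain ⟨a, rfl⟩ := h
    have ha : a ≠ 0 := by rintro rfl; simp at hA
    rw [dm_neg_scalar h2 a ha]
    nlinarith [sq_nonneg ((n : ℤ) - 1)]

theorem cm_disjoint {n : ℕ} (h2 : (2 : F) ≠ 0) (B : Matrix (Fin n) (Fin n) F) (hB : IsUnit B) :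
    cm (-1) B ⊓ cm 1 B = ⊥ := by
  rw [eq_bot_iff]
  rintro X ⟨h, h'⟩
  rw [SetLike.mem_coe, mem_cm_neg] at h
  rw [SetLike.mem_coe, mem_cm_one] at h'
  rw [← h', eq_neg_iff_add_eq_zero, ← two_smul F] at h
  have := (smul_eq_zero.1 h).resolve_left h2
  rw [hB.mul_right_eq_zero] at this
  simpa using this

theorem dm_add_le {n : ℕ} (h2 : (2 : F) ≠ 0) (B : Matrix (Fin n) (Fin n) F) (hB : IsUnit B) :
    dm (-1) B + dm 1 B ≤ dm 1 (B ^ 2) := by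
  have h := Submodule.finrank_sup_add_finrank_inf_eq (cm (-1) B) (cm 1 B)
  rw [cm_disjoint h2 B hB, finrank_bot, add_zero] at h
  unfold dm
  rw [← h]
  refine Submodule.finrank_mono (sup_le ?_ ?_)
  · intro X hX
    rw [mem_cm_neg] at hX
    rw [mem_cm_one, sq, mul_assoc, hX, mul_neg, ← mul_assoc, hX]
    simp [mul_assoc]
  · intro X hX
    rw [mem_cm_one] at hX
    rw [mem_cm_one, sq, mul_assoc, hX, ← mul_assoc, hX]
    simp [mul_assoc]

theorem dm_neg_nonscalar_sq {n : ℕ} (h2 : (2 : F) ≠ 0) (B : Matrix (Fin n) (Fin n) F) (hB : IsUnit B)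
    (h : ∀ a : F, B ^ 2 ≠ a • 1) : dm (-1) B + 3 * n ≤ n ^ 2 + 2 := by
  have h1 := dm_add_le h2 B hB
  have h3 := dm_nonscalar _ h 1 one_ne_zero
  have h4 := le_dm_one B
  omega

theorem dm_add_ge {n : ℕ} (h2 : (2 : F) ≠ 0) (B : Matrix (Fin n) (Fin n) F) (c : F) (hc : c ≠ 0)
    (h : B ^ 2 = c • 1) : n ^ 2 ≤ dm (-1) B + dm 1 B := by
  have h' := Submodule.finrank_sup_add_finrank_inf_eq (cm (-1) B) (cm 1 B)
  have htop : cm (-1) B ⊔ cm 1 B = ⊤ := by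
    rw [eq_top_iff]
    intro X _
    rw [Submodule.mem_sup]
    have hBB : B * B = c • 1 := by rw [← sq, h]
    have e1 : B * (B * X * B) = c • (X * B) := by
      rw [← mul_assoc, ← mul_assoc, hBB]; simp
    have e2 : (B * X * B) * B = c • (B * X) := by
      rw [mul_assoc, hBB]; simp
    refine ⟨(2 : F)⁻¹ • (X - c⁻¹ • (B * X * B)), ?_, (2 : F)⁻¹ • (X + c⁻¹ • (B * X * B)), ?_, ?_⟩
    · refine Submodule.smul_mem _ _ ?_
      rw [mem_cm_neg, mul_sub, sub_mul, mul_smul_comm, smul_mul_assoc, e1, e2, smul_smul, smul_smul,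
        inv_mul_cancel₀ hc]
      simp
    · refine Submodule.smul_mem _ _ ?_
      rw [mem_cm_one, mul_add, add_mul, mul_smul_comm, smul_mul_assoc, e1, e2, smul_smul, smul_smul,
        inv_mul_cancel₀ hc]
      simp [add_comm]
    · rw [← smul_add]
      have : X - c⁻¹ • (B * X * B) + (X + c⁻¹ • (B * X * B)) = (2 : F) • X := by
        rw [two_smul]; abel
      rw [this, smul_smul, inv_mul_cancel₀ h2, one_smul]
  rw [htop, finrank_top, Module.finrank_matrix] at h'
  simp only [Fintype.card_fin, Module.finrank_self, mul_one] at h'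
  unfold dm
  rw [← h', sq]
  omega

theorem two_dm_neg_le {n : ℕ} (h2 : (2 : F) ≠ 0) (B : Matrix (Fin n) (Fin n) F) (c : F) (hc : c ≠ 0)
    (h : B ^ 2 = c • 1) : 2 * dm (-1) B ≤ n ^ 2 := by
  have hBB : B * B = c • 1 := by rw [← sq, h]
  have hB : IsUnit B := by
    refine IsUnit.of_mul_eq_one (c⁻¹ • B) ?_
    rw [mul_smul_comm, hBB, smul_smul, inv_mul_cancel₀ hc, one_smul]
  by_cases hsq : IsSquare c
  · obtain ⟨a, rfl⟩ := hsq
    have ha : a ≠ 0 := by rintro rfl; simp at hc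
    let E : F → Submodule F (Fin n → F) := fun t => LinearMap.ker (Matrix.toLin' B - t • LinearMap.id)
    have hE : ∀ t v, v ∈ E t ↔ B.mulVec v = t • v := by
      intro t v; simp [E, sub_eq_zero]
    have hdis : Disjoint (E a) (E (-a)) := by
      rw [Submodule.disjoint_def]
      intro v h1 h3
      rw [hE] at h1 h3
      rw [h1, neg_smul, eq_neg_iff_add_eq_zero, ← two_smul F, smul_smul] at h3
      exact (smul_eq_zero.1 h3).resolve_left (mul_ne_zero h2 ha)
    have hsum : ∀ v : Fin n → F, ∃ x ∈ E a, ∃ y ∈ E (-a), v = x + y := by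
      intro v
      have hBBv : B.mulVec (B.mulVec v) = (a * a) • v := by
        rw [Matrix.mulVec_mulVec, hBB, Matrix.smul_mulVec, Matrix.one_mulVec]
      refine ⟨(2 * a)⁻¹ • (a • v + B.mulVec v), ?_, (2 * a)⁻¹ • (a • v - B.mulVec v), ?_, ?_⟩
      · refine Submodule.smul_mem _ _ ?_
        rw [hE, Matrix.mulVec_add, hBBv, Matrix.mulVec_smul, smul_add, smul_smul, add_comm]
      · refine Submodule.smul_mem _ _ ?_
        rw [hE, Matrix.mulVec_sub, hBBv, Matrix.mulVec_smul, smul_sub, smul_smul]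
        simp
        abel
      · rw [← smul_add]
        have : a • v + B.mulVec v + (a • v - B.mulVec v) = (2 * a) • v := by
          rw [mul_smul, two_smul]; abel
        rw [this, smul_smul, inv_mul_cancel₀ (mul_ne_zero h2 ha), one_smul]
    have hk := Submodule.finrank_add_finrank_le_of_disjoint hdis
    rw [Module.finrank_fin_fun] at hk
    have hmap : ∀ t, ∀ X ∈ cm (-1) B, ∀ v ∈ E t, (Matrix.toLin' X) v ∈ E (-t) := by
      intro t X hX v hv
      rw [mem_cm_neg] at hX
      rw [hE] at hv ⊢
      rw [Matrix.toLin'_apply, Matrix.mulVec_mulVec, hX, Matrix.neg_mulVec, ← Matrix.mulVec_mulVec, hv,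
        Matrix.mulVec_smul, neg_smul]
    let r : ∀ t, cm (-1) B →ₗ[F] (E t →ₗ[F] E (-t)) := fun t =>
      { toFun := fun X => (Matrix.toLin' X.1).restrict (hmap t X.1 X.2)
        map_add' := by intro X Y; ext; simp
        map_smul' := by intro X Y; ext; simp }
    have hr : ∀ t X v, ((r t X v : E (-t)) : Fin n → F) = X.1.mulVec v.1 := fun t X v => rfl
    have hinj : Function.Injective ((r a).prod (r (-a))) := by
      refine (injective_iff_map_eq_zero _).2 fun X hX => ?_
      have h1 : r a X = 0 := congrArg Prod.fst hX
      have h3 : r (-a) X = 0 := congrArg Prod.snd hX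
      apply Subtype.ext
      apply Matrix.toLin'.injective
      refine LinearMap.ext fun w => ?_
      obtain ⟨x, hx, y, hy, rfl⟩ := hsum w
      have e1 := hr a X ⟨x, hx⟩
      have e3 := hr (-a) X ⟨y, hy⟩
      rw [h1] at e1
      rw [h3] at e3
      simp only [LinearMap.zero_apply, ZeroMemClass.coe_zero] at e1 e3
      simp [Matrix.mulVec_add, ← e1, ← e3]
    have hle := LinearMap.finrank_le_finrank_of_injective hinj
    rw [Module.finrank_prod, Module.finrank_linearMap, Module.finrank_linearMap, neg_neg] at hle
    change dm (-1) B ≤ _ at hle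
    set k := Module.finrank F (E a)
    set l := Module.finrank F (E (-a))
    have : (k + l) ^ 2 ≤ n ^ 2 := Nat.pow_le_pow_left hk 2
    zify at *
    nlinarith [sq_nonneg ((k : ℤ) - l)]
  · have h3 := dm_neg_eq_of_sq B c hsq h
    have h4 := dm_add_le h2 B hB
    have h5 := dm_le 1 (B ^ 2)
    simp only [Fintype.card_fin] at h5
    omega

end MS


namespace MS
open Polynomial

variable {F : Type} [Field F] [Fintype F]

open Classical in
theorem units_in_subspace {n : ℕ} (E : Submodule F (Matrix (Fin n) (Fin n) F)) (h1 : 1 ∈ E)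
    (hq : 2 * n ≤ Fintype.card F) :
    Fintype.card F ^ Module.finrank F E ≤
      2 * (Finset.univ.filter (fun X : Matrix (Fin n) (Fin n) F => X ∈ E ∧ IsUnit X)).card := by
  obtain ⟨d, hd⟩ : ∃ d, Module.finrank F E = d := ⟨_, rfl⟩
  rw [hd]
  let b := Module.finBasisOfFinrankEq F E hd
  let P : MvPolynomial (Fin d) F :=
    (Matrix.of fun i j => ∑ k, MvPolynomial.X k * MvPolynomial.C ((b k : Matrix (Fin n) (Fin n) F) i j)).det
  let L : (Fin d → F) → Matrix (Fin n) (Fin n) F := fun x => ((b.equivFun.symm x : E) : Matrix (Fin n) (Fin n) F)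
  have hL : ∀ x, L x = ∑ k, x k • (b k : Matrix (Fin n) (Fin n) F) := by
    intro x; simp [L, Module.Basis.equivFun_symm_apply]
  have heval : ∀ x, MvPolynomial.eval x P = (L x).det := by
    intro x
    rw [hL]
    simp only [P]
    rw [RingHom.map_det]
    congr 1
    ext i j
    simp [Matrix.sum_apply]
  have hP0 : P ≠ 0 := by
    intro h
    have := heval (b.equivFun ⟨1, h1⟩)
    rw [h] at this
    have hL1 : L (b.equivFun ⟨1, h1⟩) = 1 := by
      show ((b.equivFun.symm (b.equivFun ⟨1, h1⟩) : E) : Matrix (Fin n) (Fin n) F) = 1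
      rw [LinearEquiv.symm_apply_apply]
    rw [hL1] at this
    simp at this
  have hdeg : P.totalDegree ≤ n := by
    simp only [P]
    rw [Matrix.det_apply]
    refine MvPolynomial.totalDegree_finsetSum_le fun σ _ => ?_
    have h2 : ∀ Q : MvPolynomial (Fin d) F, (Equiv.Perm.sign σ • Q).totalDegree ≤ Q.totalDegree := by
      intro Q
      rcases Int.units_eq_one_or (Equiv.Perm.sign σ) with h | h <;> simp [h]
    refine (h2 _).trans ?_
    refine (MvPolynomial.totalDegree_finsetProd _ _).trans ?_
    refine (Finset.sum_le_card_nsmul _ _ 1 ?_).trans (by simp)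
    intro i _
    simp only [Matrix.of_apply]
    refine MvPolynomial.totalDegree_finsetSum_le fun k _ => ?_
    refine (MvPolynomial.totalDegree_mul _ _).trans ?_
    simp
  have hsz := MvPolynomial.schwartz_zippel_totalDegree hP0 (Finset.univ : Finset F)
  rw [Finset.card_univ] at hsz
  have hqpos : (0 : ℚ≥0) < Fintype.card F := by exact_mod_cast Fintype.card_pos
  rw [div_le_iff₀ (by positivity)] at hsz
  set z := (Finset.filter (fun f => MvPolynomial.eval f P = 0)
    (Fintype.piFinset fun _ : Fin d => (Finset.univ : Finset F))).card with hz
  have hz2 : 2 * z ≤ Fintype.card F ^ d := by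
    have h3 : (P.totalDegree : ℚ≥0) / Fintype.card F ≤ 1 / 2 := by
      rw [div_le_div_iff₀ hqpos (by norm_num)]
      have : P.totalDegree * 2 ≤ 1 * Fintype.card F := by omega
      exact_mod_cast this
    have h4 : (z : ℚ≥0) ≤ 1 / 2 * (Fintype.card F : ℚ≥0) ^ d :=
      hsz.trans (by gcongr)
    have h5 : (2 : ℚ≥0) * z ≤ (Fintype.card F : ℚ≥0) ^ d := by
      calc (2 : ℚ≥0) * z ≤ 2 * (1 / 2 * (Fintype.card F : ℚ≥0) ^ d) := by gcongr
        _ = _ := by rw [← mul_assoc]; norm_num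
    exact_mod_cast h5
  have htot := Finset.card_filter_add_card_filter_not (s := (Finset.univ : Finset (Fin d → F)))
    (fun f => MvPolynomial.eval f P = 0)
  rw [Fintype.piFinset_univ] at hz
  rw [← hz] at htot
  have hle : (Finset.univ.filter (fun f : Fin d → F => ¬ MvPolynomial.eval f P = 0)).card ≤
      (Finset.univ.filter (fun X : Matrix (Fin n) (Fin n) F => X ∈ E ∧ IsUnit X)).card := by
    refine Finset.card_le_card_of_injOn L ?_ ?_
    · intro f hf
      simp only [Finset.coe_filter, Finset.mem_univ, true_and, Set.mem_ofPred_eq] at hf ⊢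
      refine ⟨(b.equivFun.symm f).2, ?_⟩
      rw [Matrix.isUnit_iff_isUnit_det, ← heval]
      exact isUnit_iff_ne_zero.2 hf
    · intro f _ g _ hfg
      exact b.equivFun.symm.injective (Subtype.ext hfg)
  simp only [Finset.card_univ, Fintype.card_fun, Fintype.card_fin] at htot
  omega

theorem card_mat (n : ℕ) : Fintype.card (Matrix (Fin n) (Fin n) F) = Fintype.card F ^ (n ^ 2) := by
  classical
  rw [Module.card_eq_pow_finrank (K := F), Module.finrank_matrix]
  simp [sq]

theorem class_card {n : ℕ} (hq : 2 * n ≤ Fintype.card F) (X₀ : Matrix (Fin n) (Fin n) F)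
    (S : Finset (Matrix (Fin n) (Fin n) F))
    (hS : ∀ X ∈ S, ∃ g : (Matrix (Fin n) (Fin n) F)ˣ, (g : Matrix (Fin n) (Fin n) F) * X₀ = X * g) :
    S.card * Fintype.card F ^ dm 1 X₀ ≤ 2 * Fintype.card F ^ (n ^ 2) := by
  classical
  choose! g hg using hS
  have h1 := units_in_subspace (cm 1 X₀) (by rw [mem_cm_one]; simp) hq
  set U := (Finset.univ.filter (fun X : Matrix (Fin n) (Fin n) F => X ∈ cm 1 X₀ ∧ IsUnit X)) with hU
  have h2 : (S ×ˢ U).card ≤ Fintype.card F ^ (n ^ 2) := by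
    rw [← card_mat n, ← Finset.card_univ]
    refine Finset.card_le_card_of_injOn (fun p => (g p.1 : Matrix (Fin n) (Fin n) F) * p.2) (by simp) ?_
    rintro ⟨X, h⟩ hXh ⟨Y, k⟩ hYk heq
    simp only [Finset.coe_product, Set.mem_prod, Finset.mem_coe, hU, Finset.mem_filter,
      Finset.mem_univ, true_and, mem_cm_one] at hXh hYk heq
    obtain ⟨hX, hh, hhu⟩ := hXh
    obtain ⟨hY, hk, hku⟩ := hYk
    have e1 : X * (g X * h) = (g X * h) * X₀ := by
      rw [← mul_assoc, ← hg X hX, mul_assoc, hh, mul_assoc]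
    have e2 : Y * (g Y * k) = (g Y * k) * X₀ := by
      rw [← mul_assoc, ← hg Y hY, mul_assoc, hk, mul_assoc]
    rw [← heq, ← e1] at e2
    have hu : IsUnit ((g X : Matrix (Fin n) (Fin n) F) * h) := (g X).isUnit.mul hhu
    have hXY : Y = X := hu.mul_left_injective e2
    subst hXY
    have := (g Y).isUnit.mul_right_injective heq
    rw [this]
  rw [Finset.card_product] at h2
  calc S.card * Fintype.card F ^ dm 1 X₀ ≤ S.card * (2 * U.card) := by gcongr; exact h1
    _ = 2 * (S.card * U.card) := by ring
    _ ≤ _ := by gcongr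

theorem class_sum {n : ℕ} (hq : 2 * n ≤ Fintype.card F)
    (S : Finset (Matrix (Fin n) (Fin n) F))
    (hS : ∀ X ∈ S, ∀ Y ∈ S, ∃ g : (Matrix (Fin n) (Fin n) F)ˣ, (g : Matrix (Fin n) (Fin n) F) * X = Y * g) :
    ∑ X ∈ S, Fintype.card F ^ dm 1 X ≤ 2 * Fintype.card F ^ (n ^ 2) := by
  rcases S.eq_empty_or_nonempty with rfl | ⟨X₀, h0⟩
  · simp
  · refine le_trans (le_of_eq ?_) (class_card hq X₀ S (fun X hX => hS X₀ h0 X hX))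
    rw [← smul_eq_mul]
    refine Finset.sum_eq_card_nsmul fun X hX => ?_
    obtain ⟨g, hg⟩ := hS X₀ h0 X hX
    rw [dm_conj 1 X₀ X g hg]

theorem ann_sum {n : ℕ} (hq : 2 * n ≤ Fintype.card F) (p : F[X]) (hp : p ≠ 0)
    (S : Finset (Matrix (Fin n) (Fin n) F)) (hS : ∀ A ∈ S, aeval A p = 0) :
    ∑ A ∈ S, Fintype.card F ^ dm 1 A ≤ (2 ^ p.natDegree) ^ n * (2 * Fintype.card F ^ (n ^ 2)) := by
  classical
  obtain ⟨hfin, hcard⟩ := card_ideals_le p hp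
  let T : Finset (Fin n → Ideal F[X]) := Fintype.piFinset fun _ => hfin.toFinset
  have hT : T.card ≤ (2 ^ p.natDegree) ^ n := by
    simp only [T, Fintype.card_piFinset, Finset.prod_const, Finset.card_univ, Fintype.card_fin]
    rw [← Set.ncard_eq_toFinset_card _ hfin]
    gcongr
  have hmap : ∀ A ∈ S, ty A ∈ T := by
    intro A hA
    simp only [T, Fintype.mem_piFinset, Set.Finite.mem_toFinset, Set.mem_ofPred_eq]
    exact fun i => ty_mem A p (hS A hA) i
  rw [← Finset.sum_fiberwise_of_maps_to hmap]
  refine (Finset.sum_le_card_nsmul _ _ (2 * Fintype.card F ^ (n ^ 2)) ?_).trans ?_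
  · intro t _
    refine class_sum hq _ ?_
    intro X hX Y hY
    rw [Finset.mem_filter] at hX hY
    exact similar_of_ty_eq (hX.2.trans hY.2.symm)
  · rw [smul_eq_mul]; gcongr

end MS


namespace MS
open Polynomial

variable {F : Type} [Field F] [Fintype F]

theorem nil_sum {k : ℕ} (hq : 2 * k ≤ Fintype.card F) (S : Finset (Matrix (Fin k) (Fin k) F))
    (hS : ∀ A ∈ S, A ^ k = 0) :
    ∑ A ∈ S, Fintype.card F ^ dm (-1) A ≤ (2 ^ k) ^ k * (2 * Fintype.card F ^ (k ^ 2)) := by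
  have := ann_sum hq (X ^ k : F[X]) (by simp) S (by intro A hA; simpa using hS A hA)
  rw [natDegree_X_pow] at this
  refine le_trans (le_of_eq ?_) this
  refine Finset.sum_congr rfl fun A hA => ?_
  rw [dm_neg_eq_of_nilpotent A (hS A hA)]

theorem charpoly_neg_coeff {m : ℕ} (A : Matrix (Fin m) (Fin m) F) (i : ℕ) :
    (-A).charpoly.coeff i = (-1) ^ m * ((-1) ^ i * A.charpoly.coeff i) := by
  have h1 : (-A).charpoly = (-1) ^ m * A.charpoly.comp (-X) := by
    have e : (-A).charmatrix = -((compRingHom (-X : F[X])).mapMatrix A.charmatrix) := by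
      ext1 i j
      by_cases hij : i = j
      · subst hij
        simp [Matrix.charmatrix_apply_eq, add_comm]
      · simp [Matrix.charmatrix_apply_ne _ _ _ hij]
    rw [Matrix.charpoly, e, Matrix.det_neg, ← RingHom.map_det]
    simp [Matrix.charpoly]
  rw [h1]
  have h2 : ((-1 : F[X]) ^ m) = C ((-1) ^ m) := by simp
  rw [h2, coeff_C_mul]
  congr 1
  have h3 : (-X : F[X]) = C (-1) * X := by simp
  rw [h3, comp_C_mul_X_coeff]
  ring

theorem charpoly_sim {m : ℕ} (A : Matrix (Fin m) (Fin m) F) (g : (Matrix (Fin m) (Fin m) F)ˣ)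
    (h : (g : Matrix (Fin m) (Fin m) F) * A = (-A) * g) : (-A).charpoly = A.charpoly := by
  have : -A = g * A * (g⁻¹ : (Matrix (Fin m) (Fin m) F)ˣ) := by
    rw [h, mul_assoc]; simp
  rw [this, Matrix.coe_units_inv, Matrix.charpoly_units_conj]

theorem skew_sum {m : ℕ} (h2 : (2 : F) ≠ 0) (hq : 2 * m ≤ Fintype.card F) (S : Finset (Matrix (Fin m) (Fin m) F))
    (hS : ∀ A ∈ S, ∃ g : (Matrix (Fin m) (Fin m) F)ˣ, (g : Matrix (Fin m) (Fin m) F) * A = (-A) * g) :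
    ∑ A ∈ S, Fintype.card F ^ dm 1 A ≤
      Fintype.card F ^ (m / 2) * ((2 ^ m) ^ m * (2 * Fintype.card F ^ (m ^ 2))) := by
  classical
  let φ : Matrix (Fin m) (Fin m) F → (Fin (m / 2) → F) := fun A j => A.charpoly.coeff (m - 2 - 2 * j)
  have hmap : ∀ A ∈ S, φ A ∈ (Finset.univ : Finset (Fin (m / 2) → F)) := by simp
  rw [← Finset.sum_fiberwise_of_maps_to hmap]
  refine (Finset.sum_le_card_nsmul _ _ ((2 ^ m) ^ m * (2 * Fintype.card F ^ (m ^ 2))) ?_).trans ?_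
  · intro t _
    rcases (S.filter (fun A => φ A = t)).eq_empty_or_nonempty with he | ⟨A₀, hA₀⟩
    · rw [he]; simp
    · have hch : ∀ A ∈ S.filter (fun A => φ A = t), A.charpoly = A₀.charpoly := by
        intro A hA
        rw [Finset.mem_filter] at hA hA₀
        have hzero : ∀ B ∈ S, ∀ i, i < m → (m + i) % 2 = 1 → B.charpoly.coeff i = 0 := by
          intro B hB i hi hodd
          obtain ⟨g, hg⟩ := hS B hB
          have h := charpoly_neg_coeff B i
          rw [charpoly_sim B g hg, ← mul_assoc, ← pow_add,
            Odd.neg_one_pow (Nat.odd_iff.2 hodd)] at h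
          have h5 : 2 * B.charpoly.coeff i = 0 := by linear_combination h
          exact (mul_eq_zero.1 h5).resolve_left h2
        have hlead : ∀ B : Matrix (Fin m) (Fin m) F, B.charpoly.coeff m = 1 := by
          intro B
          have := B.charpoly_monic
          rw [Monic, leadingCoeff, Matrix.charpoly_natDegree_eq_dim, Fintype.card_fin] at this
          exact this
        ext i
        rcases lt_trichotomy i m with hi | rfl | hi
        · rcases Nat.mod_two_eq_zero_or_one (m + i) with h | h
          · have hj : (m - 2 - i) / 2 < m / 2 := by omega
            have h6 := congrFun (hA.2.trans hA₀.2.symm) ⟨(m - 2 - i) / 2, hj⟩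
            simp only [φ] at h6
            have h7 : m - 2 - 2 * ((m - 2 - i) / 2) = i := by omega
            rwa [h7] at h6
          · rw [hzero A hA.1 i hi h, hzero A₀ hA₀.1 i hi h]
        · rw [hlead, hlead]
        · rw [coeff_eq_zero_of_natDegree_lt, coeff_eq_zero_of_natDegree_lt] <;>
            rwa [Matrix.charpoly_natDegree_eq_dim, Fintype.card_fin]
      have := ann_sum hq A₀.charpoly A₀.charpoly_monic.ne_zero (S.filter (fun A => φ A = t)) (by
        intro A hA
        rw [← hch A hA]
        exact Matrix.aeval_self_charpoly A)
      rwa [Matrix.charpoly_natDegree_eq_dim, Fintype.card_fin] at this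
  · simp

open Classical in
theorem card_cm' {ι : Type} [Fintype ι] [DecidableEq ι] (ε : F) (A : Matrix ι ι F) :
    (Finset.univ.filter (fun X => X ∈ cm ε A)).card = Fintype.card F ^ dm ε A := by
  rw [← card_cm, Nat.card_eq_fintype_card, Fintype.card_subtype]

theorem unit_sum {m : ℕ} (h2 : (2 : F) ≠ 0) (hq : 2 * m ≤ Fintype.card F) (S : Finset (Matrix (Fin m) (Fin m) F))
    (hS : ∀ B ∈ S, IsUnit B) :
    ∑ B ∈ S, Fintype.card F ^ dm (-1) B ≤
      Fintype.card F ^ (m / 2) * ((2 ^ m) ^ m * (2 * Fintype.card F ^ (m ^ 2))) := by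
  classical
  let R : Finset (Matrix (Fin m) (Fin m) F) := Finset.univ.filter
    (fun A => ∃ g : (Matrix (Fin m) (Fin m) F)ˣ, (g : Matrix (Fin m) (Fin m) F) * A = (-A) * g)
  refine le_trans ?_ (skew_sum h2 hq R (by intro A hA; simpa [R] using hA))
  have h1 : ∑ B ∈ S, Fintype.card F ^ dm (-1) B =
      ∑ B ∈ S, (R.filter (fun X => X ∈ cm (-1) B)).card := by
    refine Finset.sum_congr rfl fun B hB => ?_
    rw [← card_cm' (-1 : F) B]
    congr 1
    ext X
    simp only [Finset.mem_filter, Finset.mem_univ, true_and, R]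
    refine ⟨fun h => ⟨?_, h⟩, fun h => h.2⟩
    obtain ⟨g, rfl⟩ := hS B hB
    rw [mem_cm_neg] at h
    exact ⟨g, by rw [h, neg_mul]⟩
  rw [h1]
  simp_rw [Finset.card_filter]
  rw [Finset.sum_comm]
  refine Finset.sum_le_sum fun X hX => ?_
  rw [← Finset.card_filter]
  simp only [R, Finset.mem_filter, Finset.mem_univ, true_and] at hX
  obtain ⟨g, hg⟩ := hX
  rw [← dm_neg_eq_of_similar X g hg, ← card_cm' (-1 : F) X]
  refine Finset.card_le_card ?_
  intro B hB
  simp only [Finset.mem_filter, Finset.mem_univ, true_and, mem_cm_neg] at hB ⊢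
  rw [hB.2, neg_neg]

theorem sq_sum {m : ℕ} (hq : 2 * m ≤ Fintype.card F) (S : Finset (Matrix (Fin m) (Fin m) F))
    (hS : ∀ B ∈ S, ∃ c : F, B ^ 2 = c • 1) :
    ∑ B ∈ S, Fintype.card F ^ dm 1 B ≤
      Fintype.card F * ((2 ^ 2) ^ m * (2 * Fintype.card F ^ (m ^ 2))) := by
  classical
  choose! c hc using hS
  have hmap : ∀ A ∈ S, c A ∈ (Finset.univ : Finset F) := by simp
  rw [← Finset.sum_fiberwise_of_maps_to hmap]
  refine (Finset.sum_le_card_nsmul _ _ ((2 ^ 2) ^ m * (2 * Fintype.card F ^ (m ^ 2))) ?_).trans ?_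
  · intro t _
    have := ann_sum hq (X ^ 2 - C t) (X_pow_sub_C_ne_zero (by norm_num) t)
      (S.filter (fun A => c A = t)) (by
        intro A hA
        rw [Finset.mem_filter] at hA
        simp [hc A hA.1, hA.2, Algebra.algebraMap_eq_smul_one])
    rwa [natDegree_X_pow_sub_C] at this
  · simp

/-- the unit part, in powers of `Q` with `Q ^ 2 = q` -/
theorem I_bound {m : ℕ} (hm : 1 ≤ m) (h2 : (2 : F) ≠ 0) (hq : 2 * m ≤ Fintype.card F)
    (Q : ℝ) (hQ : 1 ≤ Q) (hQ2 : Q ^ 2 = Fintype.card F) (S : Finset (Matrix (Fin m) (Fin m) F))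
    (hS : ∀ B ∈ S, IsUnit B) :
    ∑ B ∈ S, Q ^ (3 * dm (-1) B) ≤
      2 ^ (m * m + 1) * Q ^ ((m - 1) * (m - 2) + 2 * (m / 2) + 2 * m ^ 2)
       + 2 ^ (2 * m + 1) * Q ^ (2 + 5 * (m ^ 2 / 2)) := by
  classical
  have hQ0 : (0 : ℝ) < Q := by linarith
  rw [← Finset.sum_filter_add_sum_filter_not S (fun B => ∀ a : F, B ^ 2 ≠ a • 1)]
  refine add_le_add ?_ ?_
  · set S1 := S.filter (fun B => ∀ a : F, B ^ 2 ≠ a • 1) with hS1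
    have h := unit_sum h2 hq S1 (fun B hB => hS B (Finset.mem_filter.1 hB).1)
    have h' : ∑ B ∈ S1, Q ^ (2 * dm (-1) B) ≤ Q ^ (2 * (m / 2)) * ((2 ^ m) ^ m * (2 * Q ^ (2 * m ^ 2))) := by
      simp_rw [pow_mul Q 2, hQ2]
      exact_mod_cast h
    calc ∑ B ∈ S1, Q ^ (3 * dm (-1) B) ≤ ∑ B ∈ S1, Q ^ ((m - 1) * (m - 2)) * Q ^ (2 * dm (-1) B) := by
          refine Finset.sum_le_sum fun B hB => ?_
          rw [← pow_add]
          refine pow_le_pow_right₀ hQ ?_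
          rw [Finset.mem_filter] at hB
          have := dm_neg_nonscalar_sq h2 B (hS B hB.1) hB.2
          have h3 : dm (-1) B ≤ (m - 1) * (m - 2) := by
            rcases Nat.lt_or_ge m 2 with hlt | hge
            · have : m = 1 := by omega
              subst this
              omega
            · obtain ⟨k, rfl⟩ := Nat.exists_eq_add_of_le hge
              have e1 : 2 + k - 1 = k + 1 := by omega
              have e2 : 2 + k - 2 = k := by omega
              rw [e1, e2]
              nlinarith
          omega
      _ = Q ^ ((m - 1) * (m - 2)) * ∑ B ∈ S1, Q ^ (2 * dm (-1) B) := by rw [Finset.mul_sum]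
      _ ≤ Q ^ ((m - 1) * (m - 2)) * (Q ^ (2 * (m / 2)) * ((2 ^ m) ^ m * (2 * Q ^ (2 * m ^ 2)))) := by gcongr
      _ = _ := by
        rw [pow_add Q, pow_add Q, pow_succ (2 : ℝ) (m * m), pow_mul 2 m m]
        ring
  · set S1 := S.filter (fun B => ¬ ∀ a : F, B ^ 2 ≠ a • 1) with hS1
    have hS1' : ∀ B ∈ S1, ∃ c : F, B ^ 2 = c • 1 := by
      intro B hB
      have := (Finset.mem_filter.1 hB).2
      push Not at this
      exact this
    have h := sq_sum hq S1 hS1'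
    have h' : ∑ B ∈ S1, Q ^ (2 * dm 1 B) ≤ Q ^ 2 * ((2 ^ 2) ^ m * (2 * Q ^ (2 * m ^ 2))) := by
      simp_rw [pow_mul Q 2, hQ2]
      exact_mod_cast h
    have h3 : Q ^ (2 * m ^ 2) * ∑ B ∈ S1, Q ^ (3 * dm (-1) B) ≤
        Q ^ (2 * m ^ 2) * (2 ^ (2 * m + 1) * Q ^ (2 + 5 * (m ^ 2 / 2))) := by
      calc Q ^ (2 * m ^ 2) * ∑ B ∈ S1, Q ^ (3 * dm (-1) B)
          = ∑ B ∈ S1, Q ^ (2 * m ^ 2) * Q ^ (3 * dm (-1) B) := by rw [Finset.mul_sum]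
        _ ≤ ∑ B ∈ S1, Q ^ (5 * (m ^ 2 / 2)) * Q ^ (2 * dm 1 B) := by
          refine Finset.sum_le_sum fun B hB => ?_
          rw [← pow_add, ← pow_add]
          refine pow_le_pow_right₀ hQ ?_
          obtain ⟨c, hc⟩ := hS1' B hB
          have hc0 : c ≠ 0 := by
            rintro rfl
            have hu := (hS B (Finset.mem_filter.1 hB).1).pow 2
            rw [hc, zero_smul] at hu
            haveI : Nonempty (Fin m) := ⟨⟨0, hm⟩⟩
            exact not_isUnit_zero hu
          have a1 := dm_add_ge h2 B c hc0 hc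
          have a2 := two_dm_neg_le h2 B c hc0 hc
          omega
        _ = Q ^ (5 * (m ^ 2 / 2)) * ∑ B ∈ S1, Q ^ (2 * dm 1 B) := by rw [Finset.mul_sum]
        _ ≤ Q ^ (5 * (m ^ 2 / 2)) * (Q ^ 2 * ((2 ^ 2) ^ m * (2 * Q ^ (2 * m ^ 2)))) := by gcongr
        _ = _ := by
          rw [pow_add Q, pow_succ (2 : ℝ) (2 * m), pow_mul 2 2 m]
          ring
    exact le_of_mul_le_mul_left h3 (by positivity)

/-- nilpotent part, crude -/
theorem Nil_bound {k : ℕ} (hq : 2 * k ≤ Fintype.card F)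
    (Q : ℝ) (hQ : 1 ≤ Q) (hQ2 : Q ^ 2 = Fintype.card F) (S : Finset (Matrix (Fin k) (Fin k) F))
    (hS : ∀ B ∈ S, B ^ k = 0) (e : ℕ) (he : ∀ B ∈ S, dm (-1) B ≤ e) :
    ∑ B ∈ S, Q ^ (3 * dm (-1) B) ≤ 2 ^ (k * k + 1) * Q ^ (e + 2 * k ^ 2) := by
  have hQ0 : (0 : ℝ) < Q := by linarith
  have h := nil_sum hq S hS
  have h' : ∑ B ∈ S, Q ^ (2 * dm (-1) B) ≤ (2 ^ k) ^ k * (2 * Q ^ (2 * k ^ 2)) := by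
    simp_rw [pow_mul Q 2, hQ2]
    exact_mod_cast h
  calc ∑ B ∈ S, Q ^ (3 * dm (-1) B) ≤ ∑ B ∈ S, Q ^ e * Q ^ (2 * dm (-1) B) := by
        refine Finset.sum_le_sum fun B hB => ?_
        rw [← pow_add]
        refine pow_le_pow_right₀ hQ ?_
        have := he B hB
        omega
    _ = Q ^ e * ∑ B ∈ S, Q ^ (2 * dm (-1) B) := by rw [Finset.mul_sum]
    _ ≤ Q ^ e * ((2 ^ k) ^ k * (2 * Q ^ (2 * k ^ 2))) := by gcongr
    _ = _ := by
      rw [pow_add Q, pow_succ (2 : ℝ) (k * k), pow_mul 2 k k]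
      ring

end MS


namespace MS
open Polynomial

section
variable {F : Type} [Field F]

theorem dm_reindex {ι κ : Type} [Fintype ι] [DecidableEq ι] [Fintype κ] [DecidableEq κ]
    (e : ι ≃ κ) (ε : F) (A : Matrix ι ι F) :
    dm ε (Matrix.reindexAlgEquiv F F e A) = dm ε A := by
  have : cm ε (Matrix.reindexAlgEquiv F F e A) =
      (cm ε A).map (Matrix.reindexAlgEquiv F F e).toLinearEquiv.toLinearMap := by
    ext X
    rw [Submodule.mem_map]
    constructor
    · intro h
      refine ⟨(Matrix.reindexAlgEquiv F F e).symm X, ?_, by simp⟩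
      rw [mem_cm] at h ⊢
      apply (Matrix.reindexAlgEquiv F F e).injective
      simpa only [map_mul, map_smul, AlgEquiv.apply_symm_apply] using h
    · rintro ⟨Y, hY, rfl⟩
      rw [mem_cm] at hY ⊢
      have := congrArg (Matrix.reindexAlgEquiv F F e) hY
      simp only [map_mul, map_smul] at this
      exact this
  rw [dm, this, dm]
  exact LinearEquiv.finrank_map_eq _ _

/-- block diagonal matrix -/
def bd {ι : Type} [Fintype ι] [DecidableEq ι] {k m : ℕ} (e : Fin k ⊕ Fin m ≃ ι)
    (N : Matrix (Fin k) (Fin k) F) (B : Matrix (Fin m) (Fin m) F) : Matrix ι ι F :=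
  Matrix.reindexAlgEquiv F F e (Matrix.fromBlocks N 0 0 B)

variable {ι : Type} [Fintype ι] [DecidableEq ι] {k m : ℕ} (e : Fin k ⊕ Fin m ≃ ι)

theorem bd_mul (N N' : Matrix (Fin k) (Fin k) F) (B B' : Matrix (Fin m) (Fin m) F) :
    bd e N B * bd e N' B' = bd e (N * N') (B * B') := by
  rw [bd, bd, ← map_mul, Matrix.fromBlocks_multiply, bd]
  simp

theorem bd_one : bd e (1 : Matrix (Fin k) (Fin k) F) (1 : Matrix (Fin m) (Fin m) F) = 1 := by
  rw [bd, Matrix.fromBlocks_one, map_one]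

theorem bd_zero : bd e (0 : Matrix (Fin k) (Fin k) F) (0 : Matrix (Fin m) (Fin m) F) = 0 := by
  rw [bd, Matrix.fromBlocks_zero, map_zero]

theorem bd_pow (N : Matrix (Fin k) (Fin k) F) (B : Matrix (Fin m) (Fin m) F) (j : ℕ) :
    bd e N B ^ j = bd e (N ^ j) (B ^ j) := by
  induction j with
  | zero => simp [bd_one]
  | succ j ih => rw [pow_succ, ih, bd_mul, pow_succ, pow_succ]

theorem bd_inj {N N' : Matrix (Fin k) (Fin k) F} {B B' : Matrix (Fin m) (Fin m) F}
    (h : bd e N B = bd e N' B') : N = N' ∧ B = B' := by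
  have := (Matrix.reindexAlgEquiv F F e).injective h
  rw [Matrix.fromBlocks_inj] at this
  exact ⟨this.1, this.2.2.2⟩

/-- block diagonal unit -/
def bdU (u : (Matrix (Fin k) (Fin k) F)ˣ) (v : (Matrix (Fin m) (Fin m) F)ˣ) : (Matrix ι ι F)ˣ where
  val := bd e u v
  inv := bd e ↑u⁻¹ ↑v⁻¹
  val_inv := by rw [bd_mul]; simp [bd_one]
  inv_val := by rw [bd_mul]; simp [bd_one]

theorem off_zero {a b : ℕ} (N : Matrix (Fin a) (Fin a) F) (hN : N ^ a = 0)
    (B : Matrix (Fin b) (Fin b) F) (hB : IsUnit B) (X : Matrix (Fin a) (Fin b) F)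
    (h : N * X = -(X * B)) : X = 0 := by
  have key : ∀ j : ℕ, N ^ j * X = (-1 : F) ^ j • (X * B ^ j) := by
    intro j
    induction j with
    | zero => simp
    | succ j ih =>
      rw [pow_succ, Matrix.mul_assoc, h, Matrix.mul_neg, ← Matrix.mul_assoc, ih, Matrix.smul_mul, Matrix.mul_assoc,
        ← pow_succ B, pow_succ (-1 : F)]
      simp
  have h1 := key a
  rw [hN, Matrix.zero_mul] at h1
  have h2 : X * B ^ a = 0 := by
    have := congrArg (fun Y => (-1 : F) ^ a • Y) h1
    simp only [smul_smul, ← mul_pow] at this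
    simpa using this.symm
  obtain ⟨u, hu⟩ := hB.pow a
  have := congrArg (fun Y => Y * (↑u⁻¹ : Matrix (Fin b) (Fin b) F)) h2
  simp only [← hu, Matrix.mul_assoc, Units.mul_inv, Matrix.mul_one, Matrix.zero_mul] at this
  exact this

theorem dm_bd_le (N : Matrix (Fin k) (Fin k) F) (hN : N ^ k = 0)
    (B : Matrix (Fin m) (Fin m) F) (hB : IsUnit B) :
    dm (-1) (bd e N B) ≤ dm (-1) N + dm (-1) B := by
  rw [bd, dm_reindex]
  have hmem : ∀ X : Matrix (Fin k ⊕ Fin m) (Fin k ⊕ Fin m) F,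
      X ∈ cm (-1) (Matrix.fromBlocks N 0 0 B) → X.toBlocks₁₁ ∈ cm (-1) N ∧ X.toBlocks₂₂ ∈ cm (-1) B
        ∧ X.toBlocks₁₂ = 0 ∧ X.toBlocks₂₁ = 0 := by
    intro X hX
    rw [mem_cm_neg, ← Matrix.fromBlocks_toBlocks X, Matrix.fromBlocks_multiply,
      Matrix.fromBlocks_multiply, Matrix.fromBlocks_neg, Matrix.fromBlocks_inj] at hX
    simp only [Matrix.zero_mul, Matrix.mul_zero, add_zero, zero_add] at hX
    obtain ⟨a1, a2, a3, a4⟩ := hX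
    refine ⟨mem_cm_neg.2 a1, mem_cm_neg.2 a4, off_zero N hN B hB _ a2, ?_⟩
    have a5 : X.toBlocks₂₁.transpose = 0 := by
      refine off_zero N.transpose ?_ B.transpose ?_ _ ?_
      · rw [← Matrix.transpose_pow, hN, Matrix.transpose_zero]
      · exact (Matrix.isUnit_transpose _).2 hB
      · rw [← Matrix.transpose_mul, ← Matrix.transpose_mul, ← Matrix.transpose_neg]
        congr 1
        rw [a3, neg_neg]
    simpa using congrArg Matrix.transpose a5
  let f : cm (-1) (Matrix.fromBlocks N 0 0 B) →ₗ[F] cm (-1) N × cm (-1) B :=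
    { toFun := fun X => (⟨_, (hmem X.1 X.2).1⟩, ⟨_, (hmem X.1 X.2).2.1⟩)
      map_add' := by
        intro X Y
        rfl
      map_smul' := by
        intro c X
        rfl }
  have hf : Function.Injective f := by
    rw [← LinearMap.ker_eq_bot, LinearMap.ker_eq_bot']
    intro X hX
    have h1 : X.1.toBlocks₁₁ = 0 := congrArg (fun p => (p.1 : Matrix (Fin k) (Fin k) F)) hX
    have h2 : X.1.toBlocks₂₂ = 0 := congrArg (fun p => (p.2 : Matrix (Fin m) (Fin m) F)) hX
    have h3 := (hmem X.1 X.2).2.2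
    ext1
    rw [← Matrix.fromBlocks_toBlocks X.1, h1, h2, h3.1, h3.2]
    simp
  have := LinearMap.finrank_le_finrank_of_injective hf
  rw [Module.finrank_prod] at this
  exact this

theorem nil_pow {a : ℕ} (N : Matrix (Fin a) (Fin a) F) (h : IsNilpotent N) : N ^ a = 0 := by
  have h1 := (Matrix.isNilpotent_charpoly_sub_pow_of_isNilpotent h).eq_zero
  rw [sub_eq_zero, Fintype.card_fin] at h1
  have := Matrix.aeval_self_charpoly N
  rw [h1] at this
  simpa using this

/-- the standard equivalence -/
def ev {n : ℕ} (k m : ℕ) (h : k + m = n) : Fin k ⊕ Fin m ≃ Fin n := finSumFinEquiv.trans (finCongr h)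

theorem fitting {n : ℕ} (A : Matrix (Fin n) (Fin n) F) :
    ∃ (k m : ℕ) (h : k + m = n) (N : Matrix (Fin k) (Fin k) F) (B : Matrix (Fin m) (Fin m) F)
      (g : (Matrix (Fin n) (Fin n) F)ˣ), N ^ k = 0 ∧ IsUnit B ∧
        (g : Matrix (Fin n) (Fin n) F) * bd (ev k m h) N B = A * g := by
  classical
  let f : Module.End F (Fin n → F) := Matrix.toLin' A
  obtain ⟨j, hj⟩ := Filter.eventually_atTop.1 f.eventually_isCompl_ker_pow_range_pow
  have hc := hj (j + 1) (by omega)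
  set V := LinearMap.ker (f ^ (j + 1)) with hV
  set W := LinearMap.range (f ^ (j + 1)) with hW
  have hfV : ∀ x ∈ V, f x ∈ V := by
    intro x hx
    rw [hV, LinearMap.mem_ker] at hx ⊢
    rw [← Module.End.mul_apply, ← pow_succ, pow_succ', Module.End.mul_apply, hx, map_zero]
  have hfW : ∀ x ∈ W, f x ∈ W := by
    rintro x ⟨y, rfl⟩
    refine ⟨f y, ?_⟩
    rw [← Module.End.mul_apply, ← pow_succ, pow_succ', Module.End.mul_apply]
  let f1 := f.restrict hfV
  let f2 := f.restrict hfW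
  obtain ⟨k, hk⟩ : ∃ k, Module.finrank F V = k := ⟨_, rfl⟩
  obtain ⟨m, hm⟩ : ∃ m, Module.finrank F W = m := ⟨_, rfl⟩
  let b1 := Module.finBasisOfFinrankEq F V hk
  let b2 := Module.finBasisOfFinrankEq F W hm
  have hkm : k + m = n := by
    have := Submodule.finrank_add_eq_of_isCompl hc
    rw [hk, hm] at this
    simpa using this
  let E := Submodule.prodEquivOfIsCompl V W hc
  let b := ((b1.prod b2).map E).reindex (ev k m hkm)
  let s := Pi.basisFun F (Fin n)
  have hEf : ∀ p, f (E p) = E (f1 p.1, f2 p.2) := by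
    intro p
    simp [E, f1, f2, LinearMap.restrict_apply]
  have hD : LinearMap.toMatrix b b f = bd (ev k m hkm) (LinearMap.toMatrix b1 b1 f1) (LinearMap.toMatrix b2 b2 f2) := by
    ext i j
    obtain ⟨i, rfl⟩ := (ev k m hkm).surjective i
    obtain ⟨j, rfl⟩ := (ev k m hkm).surjective j
    rw [LinearMap.toMatrix_apply]
    have h1 : b (ev k m hkm j) = E (b1.prod b2 j) := by simp [b]
    rw [h1, hEf]
    simp only [b, Module.Basis.repr_reindex, Module.Basis.map_repr, LinearEquiv.trans_apply,
      LinearEquiv.symm_apply_apply, Finsupp.mapDomain_equiv_apply, Equiv.symm_apply_apply, bd,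
      Matrix.coe_reindexAlgEquiv, Matrix.reindex_apply, Matrix.submatrix_apply]
    rcases i with i | i <;> rcases j with j | j <;> simp [LinearMap.toMatrix_apply]
  have hU : s.toMatrix b * b.toMatrix s = 1 := Module.Basis.toMatrix_mul_toMatrix_flip s b
  have hU' : b.toMatrix s * s.toMatrix b = 1 := Module.Basis.toMatrix_mul_toMatrix_flip b s
  refine ⟨k, m, hkm, LinearMap.toMatrix b1 b1 f1, LinearMap.toMatrix b2 b2 f2,
    ⟨s.toMatrix b, b.toMatrix s, hU, hU'⟩, ?_, ?_, ?_⟩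
  · apply nil_pow
    refine ⟨j + 1, ?_⟩
    have h0 : f1 ^ (j + 1) = 0 := by
      ext1 x
      apply Subtype.ext
      have : f1 ^ (j + 1) = (f ^ (j + 1)).restrict (p := V) (q := V) (fun x hx => by
        have := hx
        rw [hV, LinearMap.mem_ker] at this
        rw [this]; exact V.zero_mem) := by
        exact Module.End.pow_restrict (j + 1) hfV _
      rw [this, LinearMap.coe_restrict_apply]
      have hx : (f ^ (j + 1)) (x : Fin n → F) = 0 := LinearMap.mem_ker.1 x.2
      rw [hx]
      simp
    have := LinearMap.toMatrix_pow b1 f1 (j + 1)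
    rw [this, h0, map_zero]
  · have hinj : Function.Injective f2 := by
      rw [← LinearMap.ker_eq_bot, LinearMap.ker_eq_bot']
      intro x hx
      have hx0 : f x = 0 := by
        have := congrArg Subtype.val hx
        simpa [f2, LinearMap.coe_restrict_apply] using this
      have hxV : (x : Fin n → F) ∈ V := by
        rw [hV, LinearMap.mem_ker, pow_succ, Module.End.mul_apply, hx0, map_zero]
      have := (Submodule.disjoint_def.1 hc.disjoint) _ hxV x.2
      exact Subtype.ext this
    have hunit : IsUnit f2 := by
      rw [Module.End.isUnit_iff]
      exact ⟨hinj, LinearMap.injective_iff_surjective.1 hinj⟩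
    have := hunit.map (LinearMap.toMatrixAlgEquiv b2)
    exact this
  · show s.toMatrix b * _ = A * s.toMatrix b
    rw [← hD, basis_toMatrix_mul_linearMap_toMatrix]
    have : A = LinearMap.toMatrix s s f := by
      simp only [s, f]
      rw [LinearMap.toMatrix_eq_toMatrix', LinearMap.toMatrix'_toLin']
    conv_rhs => rw [this]
    rw [linearMap_toMatrix_mul_basis_toMatrix]

end

end MS


namespace MS
open Polynomial

variable {F : Type} [Field F] [Fintype F]

open Classical in
theorem card_units (k : ℕ) (hq : 2 * k ≤ Fintype.card F) :
    Fintype.card F ^ (k ^ 2) ≤ 2 * Fintype.card (Matrix (Fin k) (Fin k) F)ˣ := by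
  have h := units_in_subspace (⊤ : Submodule F (Matrix (Fin k) (Fin k) F)) (by simp) hq
  rw [finrank_top, Module.finrank_matrix] at h
  simp only [Fintype.card_fin, Module.finrank_self, mul_one, ← sq, Submodule.mem_top, true_and] at h
  refine h.trans ?_
  gcongr
  rw [← Finset.card_univ]
  refine (Finset.card_le_card ?_).trans
    (Finset.card_image_le (f := fun u : (Matrix (Fin k) (Fin k) F)ˣ => (u : Matrix (Fin k) (Fin k) F)))
  intro X hX
  obtain ⟨u, rfl⟩ := (Finset.mem_filter.1 hX).2
  simp

open Classical in
theorem type_sum {n k m : ℕ} (h : k + m = n) (hq : 2 * n ≤ Fintype.card F)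
    (Q : ℝ) (hQ : 1 ≤ Q) (hQ2 : Q ^ 2 = Fintype.card F) (T : Finset (Matrix (Fin n) (Fin n) F))
    (hT : ∀ A ∈ T, ∃ (N : Matrix (Fin k) (Fin k) F) (B : Matrix (Fin m) (Fin m) F)
      (g : (Matrix (Fin n) (Fin n) F)ˣ), N ^ k = 0 ∧ IsUnit B ∧
        (g : Matrix (Fin n) (Fin n) F) * bd (ev k m h) N B = A * g) :
    ∀ (SN : Finset (Matrix (Fin k) (Fin k) F)) (SB : Finset (Matrix (Fin m) (Fin m) F)),
    (∀ N, N ^ k = 0 → N ∈ SN) → (∀ B, IsUnit B → B ∈ SB) →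
    Q ^ (2 * (k ^ 2 + m ^ 2)) * ∑ A ∈ T, Q ^ (3 * dm (-1) A) ≤
      4 * Q ^ (2 * n ^ 2) *
      ((∑ N ∈ SN, Q ^ (3 * dm (-1) N)) *
       (∑ B ∈ SB, Q ^ (3 * dm (-1) B))) := by
  have hQ0 : (0 : ℝ) < Q := by linarith
  intro SN SB hSN hSB
  choose! N B g hN hB hg using hT
  let e := ev k m h
  let α := Matrix (Fin n) (Fin n) F
  let R := ((Finset.univ : Finset α) ×ˢ
    (SN ×ˢ
     SB))
  let L := T ×ˢ ((Finset.univ : Finset (Matrix (Fin k) (Fin k) F)ˣ) ×ˢ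
    (Finset.univ : Finset (Matrix (Fin m) (Fin m) F)ˣ))
  let φ : α × ((Matrix (Fin k) (Fin k) F)ˣ × (Matrix (Fin m) (Fin m) F)ˣ) →
      α × (Matrix (Fin k) (Fin k) F × Matrix (Fin m) (Fin m) F) := fun p =>
    ((g p.1 : α) * bd e p.2.1 p.2.2,
      ((↑(p.2.1⁻¹) : Matrix (Fin k) (Fin k) F) * N p.1 * p.2.1,
       (↑(p.2.2⁻¹) : Matrix (Fin m) (Fin m) F) * B p.1 * p.2.2))
  have hφ : ∀ p, (φ p).1 * bd e (φ p).2.1 (φ p).2.2 = (g p.1 : α) * bd e (N p.1) (B p.1) * bd e p.2.1 p.2.2 := by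
    intro p
    simp only [φ]
    rw [mul_assoc, bd_mul, mul_assoc (g p.1 : α) (bd e (N p.1) (B p.1)), bd_mul]
    congr 2 <;> simp [← mul_assoc]
  have hφu : ∀ p, IsUnit (φ p).1 := by
    intro p
    exact (g p.1).isUnit.mul (bdU e p.2.1 p.2.2).isUnit
  have hφ2 : ∀ p, p.1 ∈ T → (φ p).1 * bd e (φ p).2.1 (φ p).2.2 = p.1 * (φ p).1 := by
    intro p hp
    rw [hφ, hg _ hp, mul_assoc]
  have hinj : Set.InjOn φ L := by
    intro p hp p' hp' heq
    simp only [L, Finset.coe_product, Set.mem_prod, Finset.mem_coe] at hp hp'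
    have h1 := hφ2 p hp.1
    have h2 := hφ2 p' hp'.1
    have h3 : p.1 * (φ p).1 = p'.1 * (φ p).1 := by
      rw [← h1, heq, h2]
    have h4 : p.1 = p'.1 := (hφu p).mul_left_injective h3
    have h5 : (g p.1 : α) * bd e p.2.1 p.2.2 = (g p'.1 : α) * bd e p'.2.1 p'.2.2 := congrArg Prod.fst heq
    rw [← h4] at h5
    have h6 := (g p.1).isUnit.mul_right_injective h5
    obtain ⟨h7, h8⟩ := bd_inj e h6
    exact Prod.ext h4 (Prod.ext (Units.ext h7) (Units.ext h8))
  have hmaps : ∀ p ∈ L, φ p ∈ R := by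
    intro p hp
    simp only [L, Finset.mem_product, Finset.mem_univ, and_true] at hp
    simp only [R, Finset.mem_product, Finset.mem_univ, true_and, φ]
    refine ⟨hSN _ ?_, hSB _ ?_⟩
    · rw [Units.conj_pow', hN _ hp]
      simp
    · exact ((p.2.2⁻¹).isUnit.mul (hB _ hp)).mul p.2.2.isUnit
  let w : α × (Matrix (Fin k) (Fin k) F × Matrix (Fin m) (Fin m) F) → ℝ := fun p =>
    Q ^ (3 * dm (-1) p.2.1) * Q ^ (3 * dm (-1) p.2.2)
  have hw : ∀ p ∈ L, Q ^ (3 * dm (-1) p.1) ≤ w (φ p) := by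
    intro p hp
    simp only [L, Finset.mem_product, Finset.mem_univ, and_true] at hp
    have h1 : dm (-1) p.1 = dm (-1) (bd e (N p.1) (B p.1)) :=
      (dm_conj (-1) _ _ (g p.1) (hg _ hp)).symm
    have h2 := dm_bd_le e (N p.1) (hN _ hp) (B p.1) (hB _ hp)
    have h3 : dm (-1) (φ p).2.1 = dm (-1) (N p.1) :=
      dm_conj (-1) _ _ p.2.1 (by simp [φ, ← mul_assoc])
    have h4 : dm (-1) (φ p).2.2 = dm (-1) (B p.1) :=
      dm_conj (-1) _ _ p.2.2 (by simp [φ, ← mul_assoc])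
    simp only [w]
    rw [← pow_add, h3, h4]
    exact pow_le_pow_right₀ hQ (by omega)
  have hmain : ∑ p ∈ L, Q ^ (3 * dm (-1) p.1) ≤ ∑ p ∈ R, w p := by
    calc ∑ p ∈ L, Q ^ (3 * dm (-1) p.1) ≤ ∑ p ∈ L, w (φ p) := Finset.sum_le_sum hw
      _ = ∑ p ∈ L.image φ, w p := (Finset.sum_image hinj).symm
      _ ≤ ∑ p ∈ R, w p := by
        refine Finset.sum_le_sum_of_subset_of_nonneg ?_ ?_
        · intro p hp
          obtain ⟨p', hp', rfl⟩ := Finset.mem_image.1 hp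
          exact hmaps p' hp'
        · intro p _ _
          positivity
  have hR : ∑ p ∈ R, w p = Q ^ (2 * n ^ 2) *
      ((∑ N ∈ SN, Q ^ (3 * dm (-1) N)) *
       (∑ B ∈ SB, Q ^ (3 * dm (-1) B))) := by
    simp only [R, w]
    rw [Finset.sum_product]
    dsimp only
    rw [Finset.sum_const, Finset.card_univ, card_mat, nsmul_eq_mul, Finset.sum_mul_sum,
      ← Finset.sum_product', pow_mul, hQ2]
    push_cast
    rfl
  have hLs : ∑ p ∈ L, Q ^ (3 * dm (-1) p.1) =
      ((Fintype.card (Matrix (Fin k) (Fin k) F)ˣ : ℝ) * Fintype.card (Matrix (Fin m) (Fin m) F)ˣ) *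
        ∑ A ∈ T, Q ^ (3 * dm (-1) A) := by
    simp only [L]
    rw [Finset.sum_product, Finset.mul_sum]
    refine Finset.sum_congr rfl fun A _ => ?_
    simp [Fintype.card_prod]
  rw [hLs, hR] at hmain
  have hck := card_units (F := F) k (by omega)
  have hcm := card_units (F := F) m (by omega)
  have hck' : Q ^ (2 * k ^ 2) ≤ 2 * (Fintype.card (Matrix (Fin k) (Fin k) F)ˣ : ℝ) := by
    rw [pow_mul, hQ2]; exact_mod_cast hck
  have hcm' : Q ^ (2 * m ^ 2) ≤ 2 * (Fintype.card (Matrix (Fin m) (Fin m) F)ˣ : ℝ) := by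
    rw [pow_mul, hQ2]; exact_mod_cast hcm
  have hS0 : 0 ≤ ∑ A ∈ T, Q ^ (3 * dm (-1) A) := Finset.sum_nonneg fun _ _ => by positivity
  calc Q ^ (2 * (k ^ 2 + m ^ 2)) * ∑ A ∈ T, Q ^ (3 * dm (-1) A)
      = (Q ^ (2 * k ^ 2) * Q ^ (2 * m ^ 2)) * ∑ A ∈ T, Q ^ (3 * dm (-1) A) := by
        rw [← pow_add, mul_add]
    _ ≤ ((2 * (Fintype.card (Matrix (Fin k) (Fin k) F)ˣ : ℝ)) *
          (2 * (Fintype.card (Matrix (Fin m) (Fin m) F)ˣ : ℝ))) * ∑ A ∈ T, Q ^ (3 * dm (-1) A) := by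
        gcongr
    _ = 4 * (((Fintype.card (Matrix (Fin k) (Fin k) F)ˣ : ℝ) * Fintype.card (Matrix (Fin m) (Fin m) F)ˣ) *
        ∑ A ∈ T, Q ^ (3 * dm (-1) A)) := by ring
    _ ≤ _ := by rw [mul_assoc 4]; gcongr

end MS


namespace MS
open Polynomial

variable {F : Type} [Field F] [Fintype F]

theorem expo_one (k m n E : ℕ) (h : k + m = n) (hm : 1 ≤ m) (hE : E + 2 * n = 3 * n ^ 2 + 2) :
    2 * n ^ 2 + (k ^ 2 + 2 * k ^ 2) + ((m - 1) * (m - 2) + 2 * (m / 2) + 2 * m ^ 2) ≤ 2 * (k ^ 2 + m ^ 2) + E := by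
  subst h
  have h1 : 2 * (m / 2) ≤ m := Nat.mul_div_le m 2
  have h2 : (m - 1) * (m - 2) + 3 * m ≤ m ^ 2 + 2 := by
    rcases Nat.lt_or_ge m 2 with hlt | hge
    · have : m = 1 := by omega
      subst this
      norm_num
    · obtain ⟨j, rfl⟩ := Nat.exists_eq_add_of_le hge
      have e1 : 2 + j - 1 = j + 1 := by omega
      have e2 : 2 + j - 2 = j := by omega
      rw [e1, e2]
      nlinarith
  have h3 : k ≤ k * m := Nat.le_mul_of_pos_right k hm
  nlinarith

theorem expo_two (k m n E : ℕ) (h : k + m = n) (hm : 1 ≤ m) (hn : 3 ≤ n) (hE : E + 2 * n = 3 * n ^ 2 + 2) :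
    2 * n ^ 2 + (k ^ 2 + 2 * k ^ 2) + (2 + 5 * (m ^ 2 / 2)) ≤ 2 * (k ^ 2 + m ^ 2) + E := by
  subst h
  suffices h : 5 * (m ^ 2 / 2) + 2 * k + 2 * m ≤ 2 * k * m + 3 * m ^ 2 by nlinarith
  have h3 : k ≤ k * m := Nat.le_mul_of_pos_right k hm
  rcases Nat.lt_or_ge m 4 with hlt | hge
  · interval_cases m <;> omega
  · have h1 : 2 * (m ^ 2 / 2) ≤ m ^ 2 := Nat.mul_div_le _ 2
    nlinarith

theorem calc_aux (Q : ℝ) (hQ : 1 ≤ Q) (Ni Ii x y z : ℝ) (a b c d f E : ℕ)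
    (hx : 0 ≤ x) (hy : 0 ≤ y) (hz : 0 ≤ z) (hI0 : 0 ≤ Ii) (hN : Ni ≤ x * Q ^ b)
    (hI : Ii ≤ y * Q ^ c + z * Q ^ d) (h1 : a + b + c ≤ f + E) (h2 : a + b + d ≤ f + E) :
    4 * Q ^ a * (Ni * Ii) ≤ Q ^ f * ((4 * x * (y + z)) * Q ^ E) := by
  have hQ0 : (0 : ℝ) < Q := by linarith
  have h3 : Q ^ (a + b + c) ≤ Q ^ (f + E) := pow_le_pow_right₀ hQ h1
  have h4 : Q ^ (a + b + d) ≤ Q ^ (f + E) := pow_le_pow_right₀ hQ h2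
  have h5 : Ni * Ii ≤ (x * Q ^ b) * (y * Q ^ c + z * Q ^ d) :=
    mul_le_mul hN hI hI0 (by positivity)
  calc 4 * Q ^ a * (Ni * Ii) ≤ 4 * Q ^ a * ((x * Q ^ b) * (y * Q ^ c + z * Q ^ d)) :=
        mul_le_mul_of_nonneg_left h5 (by positivity)
    _ = 4 * x * (y * Q ^ (a + b + c) + z * Q ^ (a + b + d)) := by
        rw [pow_add, pow_add, pow_add]; ring
    _ ≤ 4 * x * (y * Q ^ (f + E) + z * Q ^ (f + E)) := by gcongr
    _ = _ := by rw [pow_add]; ring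

theorem S_bound (n : ℕ) (hn : 3 ≤ n) : ∃ C : ℝ, 0 < C ∧ ∀ (F : Type) [Field F] [Fintype F] [DecidableEq F],
    (2 : F) ≠ 0 → 2 * n ≤ Fintype.card F → ∀ (Q : ℝ), 1 ≤ Q → Q ^ 2 = Fintype.card F →
    ∀ E : ℕ, E + 2 * n = 3 * n ^ 2 + 2 →
    ∑ A ∈ Finset.univ.filter (fun A : Matrix (Fin n) (Fin n) F => A ≠ 0), Q ^ (3 * dm (-1) A) ≤ C * Q ^ E := by
  let K : ℕ → ℝ := fun m => 4 * 2 ^ ((n - m) * (n - m) + 1) * (2 ^ (m * m + 1) + 2 ^ (2 * m + 1))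
    + 2 ^ (n * n + 1)
  refine ⟨∑ m ∈ Finset.range (n + 1), K m, Finset.sum_pos (fun m _ => by positivity) (by simp), ?_⟩
  intro F _ _ _ h2 hq Q hQ hQ2 E hE
  classical
  have hQ0 : (0 : ℝ) < Q := by linarith
  have hfit : ∀ A : Matrix (Fin n) (Fin n) F, ∃ m : ℕ, ∃ (k : ℕ) (h : k + m = n)
      (N : Matrix (Fin k) (Fin k) F) (B : Matrix (Fin m) (Fin m) F)
      (g : (Matrix (Fin n) (Fin n) F)ˣ), N ^ k = 0 ∧ IsUnit B ∧
        (g : Matrix (Fin n) (Fin n) F) * bd (ev k m h) N B = A * g := by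
    intro A
    obtain ⟨k, m, h, r⟩ := fitting A
    exact ⟨m, k, h, r⟩
  choose τ hτ using hfit
  have hmap : ∀ A ∈ Finset.univ.filter (fun A : Matrix (Fin n) (Fin n) F => A ≠ 0), τ A ∈ Finset.range (n + 1) := by
    intro A _
    obtain ⟨k, h, _⟩ := hτ A
    rw [Finset.mem_range]
    omega
  rw [← Finset.sum_fiberwise_of_maps_to hmap, Finset.sum_mul]
  refine Finset.sum_le_sum fun m hm => ?_
  set T := (Finset.univ.filter (fun A : Matrix (Fin n) (Fin n) F => A ≠ 0)).filter (fun A => τ A = m) with hTdef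
  rcases Nat.eq_zero_or_pos m with rfl | hm1
  · have h1 : ∀ A ∈ T, A ^ n = 0 := by
      intro A hA
      simp only [hTdef, Finset.mem_filter] at hA
      obtain ⟨k, h, N, B, g, hN, hB, hg⟩ := hτ A
      obtain ⟨m, hm⟩ : ∃ m, τ A = m := ⟨_, rfl⟩
      have hm0 : m = 0 := by rw [← hm]; exact hA.2
      generalize τ A = m' at *
      subst hm
      subst hm0
      have hk : k = n := by omega
      subst hk
      have e1 : bd (ev k 0 h) N B ^ k = 0 := by
        rw [bd_pow, hN, Subsingleton.elim (B ^ k) 0, bd_zero]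
      have e2 : A = g * bd (ev k 0 h) N B * (g⁻¹ : (Matrix (Fin k) (Fin k) F)ˣ) := by
        rw [hg, mul_assoc]; simp
      rw [e2, Units.conj_pow, e1]
      simp
    have h3 := Nil_bound hq Q hQ hQ2 T h1 (n ^ 2 + 2 - 2 * n) (by
      intro A hA
      simp only [hTdef, Finset.mem_filter] at hA
      have := dm_neg_le h2 A hA.1.2
      omega)
    have h4 : n ^ 2 + 2 - 2 * n + 2 * n ^ 2 = E := by
      have : 2 * n ≤ n ^ 2 := by nlinarith
      omega
    rw [h4] at h3
    refine h3.trans ?_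
    gcongr
    simp only [K]
    refine le_add_of_nonneg_left ?_
    positivity
  · rw [Finset.mem_range] at hm
    obtain ⟨k, h⟩ : ∃ k, k + m = n := ⟨n - m, by omega⟩
    have hT := type_sum h hq Q hQ hQ2 T (by
      intro A hA
      simp only [hTdef, Finset.mem_filter] at hA
      obtain ⟨k', h', N, B, g, r⟩ := hτ A
      have hA2 := hA.2
      generalize τ A = m' at *
      subst hA2
      obtain rfl : k' = k := by omega
      exact ⟨N, B, g, r⟩)
      (Finset.univ.filter (fun N : Matrix (Fin k) (Fin k) F => N ^ k = 0))
      (Finset.univ.filter (fun B : Matrix (Fin m) (Fin m) F => IsUnit B))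
      (by simp) (by simp)
    have hI := I_bound hm1 h2 (by omega) Q hQ hQ2
      (Finset.univ.filter (fun B : Matrix (Fin m) (Fin m) F => IsUnit B)) (by simp)
    have hNil := Nil_bound (F := F) (k := k) (by omega) Q hQ hQ2
      (Finset.univ.filter (fun N : Matrix (Fin k) (Fin k) F => N ^ k = 0)) (by simp) (k ^ 2)
      (by intro A _; simpa using dm_le (-1) A)
    have hI0 : 0 ≤ ∑ B ∈ Finset.univ.filter (fun B : Matrix (Fin m) (Fin m) F => IsUnit B),
      Q ^ (3 * dm (-1) B) := Finset.sum_nonneg fun _ _ => by positivity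
    have hE1 := expo_one k m n E h hm1 hE
    have hE2 := expo_two k m n E h hm1 hn hE
    have hkm : n - m = k := by omega
    have key : Q ^ (2 * (k ^ 2 + m ^ 2)) * ∑ A ∈ T, Q ^ (3 * dm (-1) A) ≤
        Q ^ (2 * (k ^ 2 + m ^ 2)) * (K m * Q ^ E) := by
      refine hT.trans ?_
      refine (calc_aux Q hQ _ _ _ _ _ _ _ _ _ _ E (by positivity) (by positivity) (by positivity) hI0
        hNil hI hE1 hE2).trans ?_
      refine mul_le_mul_of_nonneg_left ?_ (by positivity)
      refine mul_le_mul_of_nonneg_right ?_ (by positivity)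
      simp only [K, hkm]
      refine le_add_of_nonneg_right ?_
      positivity
    exact le_of_mul_le_mul_left key (by positivity)

end MS


namespace MS

variable {F : Type} [Field F] [Fintype F] [DecidableEq F]

theorem exists_char (F : Type) [Field F] [Fintype F] : ∃ χ : AddChar F ℂ, ∃ x, χ x ≠ 1 := by
  have h := AddChar.FiniteField.primitiveChar_to_Complex_isPrimitive F
  have h1 := h (one_ne_zero)
  rw [AddChar.mulShift_one] at h1
  exact ⟨_, AddChar.ne_one_iff.1 h1⟩

theorem orth {n : ℕ} (χ : AddChar F ℂ) (hχ : ∃ x, χ x ≠ 1) (Y : Matrix (Fin n) (Fin n) F) :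
    ∑ A : Matrix (Fin n) (Fin n) F, χ (A * Y).trace = if Y = 0 then (Fintype.card F : ℂ) ^ (n ^ 2) else 0 := by
  split_ifs with hY
  · subst hY
    simp [card_mat]
  · have : ∃ i j, Y i j ≠ 0 := by
      by_contra hcon
      push Not at hcon
      exact hY (by ext i j; simpa using hcon i j)
    obtain ⟨i, j, hij⟩ := this
    obtain ⟨x, hx⟩ := hχ
    let B : Matrix (Fin n) (Fin n) F := Matrix.single j i (x / Y i j)
    have hB : (B * Y).trace = x := by
      simp [B, Matrix.trace_single_mul, div_mul_cancel₀ x hij]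
    refine eq_zero_of_mul_eq_self_left (b := χ x) hx ?_
    rw [Finset.mul_sum]
    rw [← Equiv.sum_comp (Equiv.addLeft B) (fun A : Matrix (Fin n) (Fin n) F => χ (A * Y).trace)]
    refine Finset.sum_congr rfl fun A _ => ?_
    rw [Equiv.coe_addLeft, add_mul, Matrix.trace_add, AddChar.map_add_eq_mul, hB]

/-- Gauss sum -/
noncomputable def gs {n : ℕ} (χ : AddChar F ℂ) (A : Matrix (Fin n) (Fin n) F) : ℂ :=
  ∑ X : Matrix (Fin n) (Fin n) F, χ (A * X ^ 2).trace

theorem gs_sq {n : ℕ} (χ : AddChar F ℂ) (hχ : ∃ x, χ x ≠ 1) (A : Matrix (Fin n) (Fin n) F) :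
    ‖gs χ A‖ ^ 2 ≤ (Fintype.card F : ℝ) ^ (n ^ 2 + dm (-1) A) := by
  classical
  have h1 : gs χ A * (starRingEnd ℂ) (gs χ A) =
      ∑ H : Matrix (Fin n) (Fin n) F, χ (A * H ^ 2).trace *
        (if H * A + A * H = 0 then (Fintype.card F : ℂ) ^ (n ^ 2) else 0) := by
    have e1 : (starRingEnd ℂ) (gs χ A) = ∑ Y : Matrix (Fin n) (Fin n) F, χ (-(A * Y ^ 2).trace) := by
      simp only [gs, map_sum, AddChar.map_neg_eq_conj]
    rw [e1, gs, Finset.sum_mul_sum, Finset.sum_comm]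
    have e2 : ∀ Y : Matrix (Fin n) (Fin n) F,
        ∑ X : Matrix (Fin n) (Fin n) F, χ (A * X ^ 2).trace * χ (-(A * Y ^ 2).trace) =
        ∑ H : Matrix (Fin n) (Fin n) F, χ (A * H ^ 2).trace * χ (Y * (H * A + A * H)).trace := by
      intro Y
      rw [← Equiv.sum_comp (Equiv.addLeft Y)]
      refine Finset.sum_congr rfl fun H _ => ?_
      rw [Equiv.coe_addLeft, ← AddChar.map_add_eq_mul, ← AddChar.map_add_eq_mul]
      congr 1
      have e3 : A * (Y + H) ^ 2 = A * Y ^ 2 + A * H ^ 2 + (A * Y * H + A * H * Y) := by noncomm_ring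
      rw [e3, Matrix.trace_add, Matrix.trace_add, Matrix.trace_add, Matrix.mul_add, Matrix.trace_add,
        Matrix.trace_mul_comm Y (A * H), ← Matrix.mul_assoc, Matrix.trace_mul_comm (Y * H) A, ← Matrix.mul_assoc]
      ring
    simp_rw [e2]
    rw [Finset.sum_comm]
    refine Finset.sum_congr rfl fun H _ => ?_
    rw [← Finset.mul_sum, orth χ hχ]
  have h2 : ‖gs χ A‖ ^ 2 = ‖gs χ A * (starRingEnd ℂ) (gs χ A)‖ := by
    rw [norm_mul, RCLike.norm_conj, sq]
  rw [h2, h1]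
  refine (norm_sum_le _ _).trans ?_
  have h3 : ∀ H : Matrix (Fin n) (Fin n) F, ‖χ (A * H ^ 2).trace *
        (if H * A + A * H = 0 then (Fintype.card F : ℂ) ^ (n ^ 2) else 0)‖ =
        if H ∈ cm (-1) A then (Fintype.card F : ℝ) ^ (n ^ 2) else 0 := by
    intro H
    have : H ∈ cm (-1) A ↔ H * A + A * H = 0 := by
      rw [mem_cm_neg, add_comm, add_eq_zero_iff_eq_neg]
    rw [norm_mul, AddChar.norm_apply, one_mul]
    simp only [this]
    split_ifs <;> simp
  rw [Finset.sum_congr rfl fun H _ => h3 H, ← Finset.sum_filter, Finset.sum_const, nsmul_eq_mul]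
  have h4 := card_cm' (-1 : F) A
  have h5 : ((Finset.univ.filter (fun H => H ∈ cm (-1) A)).card : ℝ) = (Fintype.card F : ℝ) ^ dm (-1) A := by
    rw [← Nat.cast_pow, ← h4]
  rw [pow_add, mul_comm]
  gcongr
  exact le_of_eq (by convert h5)

theorem char_sum {ι : Type} (χ : AddChar F ℂ) (s : Finset ι) (f : ι → F) :
    χ (∑ i ∈ s, f i) = ∏ i ∈ s, χ (f i) := by
  classical
  induction s using Finset.induction_on with
  | empty => simp
  | insert a s ha ih => rw [Finset.sum_insert ha, Finset.prod_insert ha, AddChar.map_add_eq_mul, ih]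

theorem fourier {n r : ℕ} (χ : AddChar F ℂ) (hχ : ∃ x, χ x ≠ 1) (T : Matrix (Fin n) (Fin n) F) :
    (Fintype.card F : ℂ) ^ (n ^ 2) *
      ((Finset.univ.filter (fun X : Fin r → Matrix (Fin n) (Fin n) F => ∑ i, X i ^ 2 = T)).card : ℂ) =
    ∑ A : Matrix (Fin n) (Fin n) F, χ (-(A * T).trace) * gs χ A ^ r := by
  have h1 : ∀ A : Matrix (Fin n) (Fin n) F, χ (-(A * T).trace) * gs χ A ^ r =
      ∑ X : Fin r → Matrix (Fin n) (Fin n) F, χ (A * (∑ i, X i ^ 2 - T)).trace := by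
    intro A
    rw [gs, Fintype.sum_pow, Finset.mul_sum]
    refine Finset.sum_congr rfl fun X _ => ?_
    rw [Matrix.mul_sub, Matrix.trace_sub, sub_eq_add_neg, AddChar.map_add_eq_mul, mul_comm, Finset.mul_sum,
      Matrix.trace_sum, char_sum]
  simp_rw [h1]
  rw [Finset.sum_comm]
  simp_rw [orth χ hχ, sub_eq_zero]
  rw [← Finset.sum_filter, Finset.sum_const, nsmul_eq_mul, mul_comm]

theorem fourier_bound {n r : ℕ} (Q : ℝ) (hQ : 1 ≤ Q) (hQ2 : Q ^ 2 = Fintype.card F)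
    (T : Matrix (Fin n) (Fin n) F) :
    |(Fintype.card F : ℝ) ^ (n ^ 2) *
      ((Finset.univ.filter (fun X : Fin r → Matrix (Fin n) (Fin n) F => ∑ i, X i ^ 2 = T)).card : ℝ)
      - (Fintype.card F : ℝ) ^ (n ^ 2 * r)| ≤
    ∑ A ∈ Finset.univ.filter (fun A : Matrix (Fin n) (Fin n) F => A ≠ 0), Q ^ ((n ^ 2 + dm (-1) A) * r) := by
  obtain ⟨χ, hχ⟩ := exists_char F
  have hQ0 : (0 : ℝ) < Q := by linarith
  have h := fourier (r := r) χ hχ T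
  have h0 : gs χ (0 : Matrix (Fin n) (Fin n) F) = (Fintype.card F : ℂ) ^ (n ^ 2) := by
    simp [gs, card_mat]
  rw [← Finset.sum_filter_add_sum_filter_not Finset.univ (fun A : Matrix (Fin n) (Fin n) F => A ≠ 0)] at h
  have h3 : ∑ A ∈ Finset.univ.filter (fun A : Matrix (Fin n) (Fin n) F => ¬ A ≠ 0),
      χ (-(A * T).trace) * gs χ A ^ r = (Fintype.card F : ℂ) ^ (n ^ 2 * r) := by
    have : Finset.univ.filter (fun A : Matrix (Fin n) (Fin n) F => ¬ A ≠ 0) = {0} := by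
      ext A; simp
    rw [this, Finset.sum_singleton, h0, ← pow_mul]
    simp
  rw [h3, ← sub_eq_iff_eq_add] at h
  have h4 : ∀ A : Matrix (Fin n) (Fin n) F, ‖gs χ A‖ ≤ Q ^ (n ^ 2 + dm (-1) A) := by
    intro A
    refine le_of_sq_le_sq ?_ (by positivity)
    refine (gs_sq χ hχ A).trans (le_of_eq ?_)
    rw [← hQ2, ← pow_mul, ← pow_mul, mul_comm]
  rw [← Real.norm_eq_abs, ← Complex.norm_real]
  push_cast
  rw [h]
  refine (norm_sum_le _ _).trans ?_
  refine Finset.sum_le_sum fun A _ => ?_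
  rw [norm_mul, AddChar.norm_apply, one_mul, norm_pow, pow_mul]
  exact pow_le_pow_left₀ (norm_nonneg _) (h4 A) r

end MS


namespace MS

theorem main_large (n r : ℕ) (hn : 3 ≤ n) (hr : 3 ≤ r) :
    ∃ C : ℝ, 0 < C ∧ ∀ (F : Type) [Field F] [Fintype F] [DecidableEq F],
      (2 : F) ≠ 0 → 2 * n ≤ Fintype.card F → ∀ T : Matrix (Fin n) (Fin n) F,
      |((Finset.univ.filter (fun X : Fin r → Matrix (Fin n) (Fin n) F => ∑ i, X i ^ 2 = T)).card : ℝ)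
        - (Fintype.card F : ℝ) ^ (n ^ 2 * (r - 1))| ≤
        C * (Fintype.card F : ℝ) ^ (n ^ 2 + (r - 2) * (n ^ 2 + 1 - n)) := by
  obtain ⟨C, hC, hS⟩ := S_bound n hn
  refine ⟨C, hC, ?_⟩
  intro F _ _ _ h2 hq T
  have hq1 : (1 : ℝ) ≤ Fintype.card F := by exact_mod_cast Fintype.card_pos
  obtain ⟨Q, hQ, hQ2⟩ : ∃ Q : ℝ, 1 ≤ Q ∧ Q ^ 2 = Fintype.card F :=
    ⟨Real.sqrt (Fintype.card F), Real.one_le_sqrt.2 hq1, Real.sq_sqrt (by linarith)⟩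
  have hQ0 : (0 : ℝ) < Q := by linarith
  have hn2 : 2 * n ≤ n ^ 2 := by nlinarith
  obtain ⟨s, rfl⟩ := Nat.exists_eq_add_of_le hr
  obtain ⟨d, hd⟩ : ∃ d, n ^ 2 = d + 2 * n := ⟨n ^ 2 - 2 * n, by omega⟩
  have hf := fourier_bound (r := 3 + s) Q hQ hQ2 T
  have hS' := hS F h2 hq Q hQ hQ2 (3 * n ^ 2 + 2 - 2 * n) (by omega)
  have hterm : ∀ A ∈ Finset.univ.filter (fun A : Matrix (Fin n) (Fin n) F => A ≠ 0),
      Q ^ ((n ^ 2 + dm (-1) A) * (3 + s)) ≤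
        Q ^ (3 * n ^ 2 + s * (2 * n ^ 2 + 2 - 2 * n)) * Q ^ (3 * dm (-1) A) := by
    intro A hA
    rw [← pow_add]
    refine pow_le_pow_right₀ hQ ?_
    have h3 := dm_neg_le h2 A (Finset.mem_filter.1 hA).2
    have h4 : n ^ 2 + dm (-1) A ≤ 2 * n ^ 2 + 2 - 2 * n := by omega
    have h5 := Nat.mul_le_mul_left s h4
    nlinarith
  have hfin := hf.trans ((Finset.sum_le_sum hterm).trans (le_of_eq (Finset.mul_sum _ _ _).symm))
  have hfin2 := hfin.trans (mul_le_mul_of_nonneg_left hS' (by positivity))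
  set N := ((Finset.univ.filter (fun X : Fin (3 + s) → Matrix (Fin n) (Fin n) F => ∑ i, X i ^ 2 = T)).card : ℝ)
  have e1 : 3 + s - 1 = s + 2 := by omega
  have e2 : 3 + s - 2 = s + 1 := by omega
  rw [e1, e2]
  have hpos : 0 < (Fintype.card F : ℝ) ^ (n ^ 2) := by positivity
  refine le_of_mul_le_mul_left ?_ hpos
  have hl : (Fintype.card F : ℝ) ^ (n ^ 2) * |N - (Fintype.card F : ℝ) ^ (n ^ 2 * (s + 2))| =
      |(Fintype.card F : ℝ) ^ (n ^ 2) * N - (Fintype.card F : ℝ) ^ (n ^ 2 * (3 + s))| := by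
    rw [← abs_of_pos hpos, ← abs_mul, abs_of_pos hpos, mul_sub, ← pow_add]
    congr 3
    ring
  rw [hl]
  refine hfin2.trans (le_of_eq ?_)
  rw [← hQ2, ← pow_mul, ← pow_mul]
  have e3 : n ^ 2 + 1 - n = d + n + 1 := by omega
  have e4 : 2 * n ^ 2 + 2 - 2 * n = 2 * d + 2 * n + 2 := by omega
  have e5 : 3 * n ^ 2 + 2 - 2 * n = 3 * d + 4 * n + 2 := by omega
  rw [e3, e4, e5, mul_left_comm, mul_left_comm (Q ^ (2 * n ^ 2)), ← pow_add, ← pow_add]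
  congr 2
  rw [hd]
  ring

theorem main_small (n r : ℕ) (F : Type) [Field F] [Fintype F] [DecidableEq F]
    (hq : Fintype.card F ≤ 2 * n) (T : Matrix (Fin n) (Fin n) F) :
      |((Finset.univ.filter (fun X : Fin r → Matrix (Fin n) (Fin n) F => ∑ i, X i ^ 2 = T)).card : ℝ)
        - (Fintype.card F : ℝ) ^ (n ^ 2 * (r - 1))| ≤ 2 * (2 * n : ℝ) ^ (n ^ 2 * r) := by
  have hq1 : (1 : ℝ) ≤ Fintype.card F := by exact_mod_cast Fintype.card_pos
  have hq2 : (Fintype.card F : ℝ) ≤ 2 * n := by exact_mod_cast hq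
  have h1 : ((Finset.univ.filter (fun X : Fin r → Matrix (Fin n) (Fin n) F => ∑ i, X i ^ 2 = T)).card : ℝ) ≤
      (Fintype.card F : ℝ) ^ (n ^ 2 * r) := by
    have : (Finset.univ.filter (fun X : Fin r → Matrix (Fin n) (Fin n) F => ∑ i, X i ^ 2 = T)).card ≤
        Fintype.card F ^ (n ^ 2 * r) := by
      refine (Finset.card_le_univ _).trans (le_of_eq ?_)
      rw [Fintype.card_fun, card_mat, Fintype.card_fin, ← pow_mul]
    exact_mod_cast this
  have h2 : (Fintype.card F : ℝ) ^ (n ^ 2 * (r - 1)) ≤ (Fintype.card F : ℝ) ^ (n ^ 2 * r) := by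
    refine pow_le_pow_right₀ hq1 ?_
    exact Nat.mul_le_mul_left _ (Nat.sub_le r 1)
  have h3 : (Fintype.card F : ℝ) ^ (n ^ 2 * r) ≤ (2 * n : ℝ) ^ (n ^ 2 * r) :=
    pow_le_pow_left₀ (by linarith) hq2 _
  have h4 : (0 : ℝ) ≤ ((Finset.univ.filter
    (fun X : Fin r → Matrix (Fin n) (Fin n) F => ∑ i, X i ^ 2 = T)).card : ℝ) := Nat.cast_nonneg _
  have h5 : (0 : ℝ) ≤ (Fintype.card F : ℝ) ^ (n ^ 2 * (r - 1)) := by positivity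
  rw [abs_le]
  constructor <;> linarith

end MS


/-- Proposition 5.7, size part: for `n ≥ 3`, `r ≥ 3`,
`|#σ_T - q^{n²(r-1)}| ≤ c q^{(r-1)n² - (n-1)(r-2)}` uniformly over odd `q`, `T ∈ M_n(F_q)`. -/
theorem matSphere_card_general_rank (n r : ℕ) (hn : 3 ≤ n) (hr : 3 ≤ r) :
    ∃ c : ℝ, 0 < c ∧
      ∀ (F : Type) [Field F] [Fintype F] [DecidableEq F],
        Odd (Fintype.card F) →
        ∀ T : Matrix (Fin n) (Fin n) F,
          |((matSphere F r T).card : ℝ) - (Fintype.card F : ℝ) ^ (n ^ 2 * (r - 1))| ≤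
            c * (Fintype.card F : ℝ) ^
              (((r : ℤ) - 1) * (n : ℤ) ^ 2 - ((n : ℤ) - 1) * ((r : ℤ) - 2)) := by
  obtain ⟨C, hC, h⟩ := MS.main_large n r hn hr
  have hD : (0 : ℝ) ≤ 2 * (2 * n : ℝ) ^ (n ^ 2 * r) := by positivity
  refine ⟨C + 2 * (2 * n : ℝ) ^ (n ^ 2 * r), by linarith, ?_⟩
  intro F _ _ _ hodd T
  have h2 : (2 : F) ≠ 0 := by
    apply Ring.two_ne_zero
    intro hc
    have := FiniteField.even_card_iff_char_two.mp hc
    rw [Nat.odd_iff] at hodd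
    omega
  have he : ((r : ℤ) - 1) * (n : ℤ) ^ 2 - ((n : ℤ) - 1) * ((r : ℤ) - 2)
      = ((n ^ 2 + (r - 2) * (n ^ 2 + 1 - n) : ℕ) : ℤ) := by
    have hle : n ≤ n ^ 2 + 1 := by nlinarith
    have hr2 : 2 ≤ r := by omega
    push_cast [Nat.cast_sub hle, Nat.cast_sub hr2]
    ring
  rw [he, zpow_natCast]
  have hq : (1 : ℝ) ≤ (Fintype.card F : ℝ) := by
    exact_mod_cast Fintype.card_pos
  have hp : (1 : ℝ) ≤ (Fintype.card F : ℝ) ^ (n ^ 2 + (r - 2) * (n ^ 2 + 1 - n)) :=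
    one_le_pow₀ hq
  unfold matSphere
  rcases le_total (2 * n) (Fintype.card F) with hqn | hqn
  · refine (h F h2 hqn T).trans ?_
    nlinarith
  · refine (MS.main_small n r F hqn T).trans ?_
    nlinarith
end

section
/- Let r ≥ 3 be an integer. There exists a constant c > 0 such that for every odd prime power q, Σ_{S ∈ M_3(𝔽_q), S ≠ 0} q^{r(9 + ρ_S)/2} ≤ c·q^{7r+4}, where ρ_S is the radical invariant of S. (Consequently the sums Σ_{S ≠ 0} ψ(−ST)·G(S,0)^r and Σ_{S ≠ 0} ψ(−ST)·Π_{i=1}^r G(S,−M_i) over M_3(𝔽_q) are O(q^{7r+4}).) -/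
open scoped BigOperators

section Helpers
set_option linter.unusedSectionVars false
open Matrix Polynomial

variable {F : Type} [Field F] [Fintype F]

lemma mem_radical_iff (S X : Matrix (Fin 3) (Fin 3) F) :
    X ∈ radical F S ↔ S * X = - (X * S) := by
  have key : ∀ Y : Matrix (Fin 3) (Fin 3) F,
      (S * (X * Y + Y * X)).trace = ((S * X + X * S) * Y).trace := by
    intro Y
    rw [mul_add, add_mul, trace_add, trace_add, ← mul_assoc, ← mul_assoc,
      trace_mul_comm (S * Y) X, ← mul_assoc]
  change (∀ Y : Matrix (Fin 3) (Fin 3) F, (S * (X * Y + Y * X)).trace = 0) ↔ _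
  rw [← add_eq_zero_iff_eq_neg]
  constructor
  · intro h
    ext i j
    have := h (Matrix.single j i 1)
    rw [key, Matrix.trace_mul_single] at this
    simpa using this
  · intro h Y
    rw [key, h]; simp

/-- second elementary symmetric function of the eigenvalues -/
def e2 (S : Matrix (Fin 3) (Fin 3) F) : F :=
  S 0 0 * S 1 1 - S 0 1 * S 1 0 + S 0 0 * S 2 2 - S 0 2 * S 2 0 + S 1 1 * S 2 2 - S 1 2 * S 2 1

lemma cayley (S : Matrix (Fin 3) (Fin 3) F) :
    S * S * S = S.trace • (S * S) - e2 S • S + S.det • (1 : Matrix (Fin 3) (Fin 3) F) := by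
  ext i j
  fin_cases i <;> fin_cases j <;>
    simp [Matrix.mul_apply, Fin.sum_univ_three, Matrix.trace, Matrix.det_fin_three, e2] <;> ring

lemma det_trace_sub (S : Matrix (Fin 3) (Fin 3) F) :
    (S.trace • (1 : Matrix (Fin 3) (Fin 3) F) - S).det = S.trace * e2 S - S.det := by
  simp [Fin.sum_univ_three, Matrix.trace, Matrix.det_fin_three, e2]
  ring

lemma N_mul (S X : Matrix (Fin 3) (Fin 3) F) (h2 : (2 : F) ≠ 0) (h : S * X = - (X * S)) :
    (S.trace • (S * S) + S.det • (1 : Matrix (Fin 3) (Fin 3) F)) * X = 0 := by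
  have hc := cayley S
  set a := S.trace
  set b := e2 S
  set c := S.det
  have h2' : S * S * X = X * (S * S) := by
    rw [mul_assoc, h, mul_neg, ← mul_assoc, h, neg_mul, neg_neg, mul_assoc]
  have h3 : S * S * S * X = - (X * (S * S * S)) := by
    rw [mul_assoc, h, mul_neg, ← mul_assoc, h2', mul_assoc]
  have e1 : S * S * S * X = a • (S * S * X) - b • (S * X) + c • X := by
    rw [hc]; simp [add_mul, sub_mul]
  have e2 : X * (S * S * S) = a • (X * (S * S)) - b • (X * S) + c • X := by
    rw [hc]; simp [mul_add, mul_sub]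
  rw [h3, e2, ← h2', h] at e1
  have : (2 : F) • (a • (S * S * X) + c • X) = 0 := by
    rw [two_smul]
    have := sub_eq_zero.mpr e1.symm
    rw [← this]
    simp only [smul_neg]
    abel
  have := (smul_eq_zero.mp this).resolve_left h2
  simpa [add_mul] using this

lemma N_inv (S : Matrix (Fin 3) (Fin 3) F) :
    (S.trace • (S * S) - (S.trace ^ 2) • S + (S.trace * e2 S - S.det) •
        (1 : Matrix (Fin 3) (Fin 3) F)) *
      (S.trace • (S * S) + S.det • (1 : Matrix (Fin 3) (Fin 3) F))
      = (S.det * (S.trace * e2 S - S.det)) • (1 : Matrix (Fin 3) (Fin 3) F) := by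
  have hc := cayley S
  set a := S.trace
  set b := e2 S
  set c := S.det
  have h4 : S * S * (S * S) = a • (S * S * S) - b • (S * S) + c • S := by
    have : S * S * (S * S) = S * (S * S * S) := by simp only [mul_assoc]
    rw [this]
    nth_rewrite 1 [hc]
    simp [mul_add, mul_sub, mul_assoc]
  simp only [add_mul, sub_mul, mul_add, smul_mul_assoc, mul_smul_comm, mul_one, one_mul,
    ← mul_assoc] at h4 ⊢
  rw [h4, hc]
  module

lemma X_zero_of (S X : Matrix (Fin 3) (Fin 3) F) (h2 : (2 : F) ≠ 0) (h : S * X = - (X * S))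
    (h0 : S.det * (S.trace * e2 S - S.det) ≠ 0) : X = 0 := by
  have h1 := N_mul S X h2 h
  have h3 := congrArg (· * X) (N_inv S)
  simp only [mul_assoc, h1, mul_zero, smul_mul_assoc, one_mul] at h3
  exact (smul_eq_zero.mp h3.symm).resolve_left (by simpa [mul_assoc] using h0)

lemma rho_eq_zero_of (S : Matrix (Fin 3) (Fin 3) F) (h2 : (2 : F) ≠ 0)
    (h0 : S.det * (S.trace * e2 S - S.det) ≠ 0) : rho F S = 0 := by
  have : radical F S = ⊥ := by
    rw [eq_bot_iff]
    intro X hX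
    exact X_zero_of S X h2 ((mem_radical_iff S X).1 hX) h0
  unfold rho
  rw [this]; simp

/-- evaluation at a cyclic vector bounds rho -/
lemma rho_le_of_cyclic (S : Matrix (Fin 3) (Fin 3) F) (v : Fin 3 → F) (h2 : (2 : F) ≠ 0)
    (hv : ∀ w, w ∈ Submodule.span F {v, S *ᵥ v, S *ᵥ (S *ᵥ v)}) :
    rho F S ≤ Module.finrank F (LinearMap.ker
      (Matrix.mulVecLin (S.trace • (S * S) + S.det • (1 : Matrix (Fin 3) (Fin 3) F)))) := by
  set N := S.trace • (S * S) + S.det • (1 : Matrix (Fin 3) (Fin 3) F) with hN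
  let L : radical F S →ₗ[F] LinearMap.ker (Matrix.mulVecLin N) :=
    { toFun := fun X => ⟨X.1 *ᵥ v, by
        have := N_mul S X.1 h2 ((mem_radical_iff S X.1).1 X.2)
        rw [LinearMap.mem_ker, Matrix.mulVecLin_apply, Matrix.mulVec_mulVec, this]; simp⟩
      map_add' := by intro X Y; ext1; simp [Matrix.add_mulVec]
      map_smul' := by intro c X; ext1; simp [Matrix.smul_mulVec] }
  apply LinearMap.finrank_le_finrank_of_injective (f := L)
  rw [← LinearMap.ker_eq_bot, eq_bot_iff]
  rintro ⟨X, hX⟩ h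
  have hX' := (mem_radical_iff S X).1 hX
  have h0 : X *ᵥ v = 0 := congrArg Subtype.val h
  have hcom : ∀ w, X *ᵥ (S *ᵥ w) = - (S *ᵥ (X *ᵥ w)) := by
    intro w
    rw [Matrix.mulVec_mulVec, Matrix.mulVec_mulVec, hX', Matrix.neg_mulVec, neg_neg]
  have hker : Submodule.span F {v, S *ᵥ v, S *ᵥ (S *ᵥ v)} ≤ LinearMap.ker (Matrix.mulVecLin X) := by
    rw [Submodule.span_le]
    rintro w (rfl | rfl | rfl)
    · simpa using h0
    · simp [hcom, h0]
    · rw [SetLike.mem_coe, LinearMap.mem_ker, Matrix.mulVecLin_apply, hcom, hcom, h0]; simp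
  have : X = 0 := by
    ext i j
    have := hker (hv (Pi.single j 1))
    simp only [LinearMap.mem_ker, Matrix.mulVecLin_apply, Matrix.mulVec_single_one] at this
    simpa using congrFun this i
  subst this
  rfl

lemma exists_vecMulVec_of_rank_le_one (A : Matrix (Fin 3) (Fin 3) F) (h : A.rank ≤ 1) :
    ∃ u v : Fin 3 → F, A = Matrix.vecMulVec u v := by
  unfold Matrix.rank at h
  obtain ⟨u, hu⟩ := finrank_le_one_iff.1 h
  choose c hc using fun j => hu ⟨A *ᵥ (Pi.single j 1), ⟨Pi.single j 1, by simp⟩⟩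
  refine ⟨u.1, c, ?_⟩
  ext i j
  have := congrFun (congrArg Subtype.val (hc j)) i
  simp at this
  rw [Matrix.vecMulVec_apply, ← this, mul_comm]

/-- Degree of the minimal polynomial at most two: `S = a + u vᵀ`. -/
lemma derogatory (S : Matrix (Fin 3) (Fin 3) F) (h : (minpoly F S).natDegree ≤ 2) :
    ∃ (a : F) (u v : Fin 3 → F),
      S = a • (1 : Matrix (Fin 3) (Fin 3) F) + Matrix.vecMulVec u v := by
  have hSint : IsIntegral F S := Algebra.IsIntegral.isIntegral S
  have hmon := minpoly.monic hSint
  have hpos := minpoly.natDegree_pos hSint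
  -- a root of the charpoly is a root of the minimal polynomial
  have hroot : ∀ k : F, S.charpoly.IsRoot k → (minpoly F S).IsRoot k := by
    intro k hk
    have hdet : (Matrix.scalar (Fin 3) k - S).det = 0 := by
      rw [← Matrix.eval_charpoly]; exact hk
    obtain ⟨w, hw0, hw⟩ := Matrix.exists_mulVec_eq_zero_iff.2 hdet
    have hSw : S *ᵥ w = k • w := by
      rw [Matrix.sub_mulVec, sub_eq_zero] at hw
      rw [← hw]; ext i; simp [Matrix.scalar, Matrix.mulVec_diagonal]
    have : ∀ f : F[X], (aeval S f) *ᵥ w = (f.eval k) • w := by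
      intro f
      induction f using Polynomial.induction_on' with
      | add p q hp hq => simp [Matrix.add_mulVec, hp, hq, add_smul]
      | monomial n a =>
        have hp : ∀ n : ℕ, (S ^ n) *ᵥ w = k ^ n • w := by
          intro n
          induction n with
          | zero => simp
          | succ n ih =>
            rw [pow_succ, ← Matrix.mulVec_mulVec, hSw, Matrix.mulVec_smul, ih, smul_smul, pow_succ,
              mul_comm]
        rw [aeval_monomial, eval_monomial, ← Matrix.mulVec_mulVec, hp, Algebra.algebraMap_eq_smul_one,
          Matrix.smul_mulVec, Matrix.one_mulVec, smul_smul]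
    have h1 := this (minpoly F S)
    rw [minpoly.aeval, Matrix.zero_mulVec] at h1
    exact (smul_eq_zero.mp h1.symm).resolve_right hw0
  obtain ⟨g, hg⟩ := Matrix.minpoly_dvd_charpoly S
  have hchar : S.charpoly.natDegree = 3 := by simp
  have hcm := Matrix.charpoly_monic S
  have hgm : g.Monic := by
    rw [hg] at hcm; exact hmon.of_mul_monic_left hcm
  have hdeg : (minpoly F S).natDegree + g.natDegree = 3 := by
    rw [hg, hmon.natDegree_mul hgm] at hchar
    exact hchar
  -- find a root of minpoly
  have hex : ∃ k, (minpoly F S).IsRoot k := by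
    rcases (by omega : (minpoly F S).natDegree = 1 ∨ g.natDegree = 1) with h1 | h1
    · exact Polynomial.exists_root_of_degree_eq_one
        ((degree_eq_iff_natDegree_eq_of_pos one_pos).2 h1)
    · obtain ⟨k, hk⟩ := Polynomial.exists_root_of_degree_eq_one
        ((degree_eq_iff_natDegree_eq_of_pos one_pos).2 h1)
      refine ⟨k, hroot k ?_⟩
      rw [hg]
      simp only [IsRoot, eval_mul] at hk ⊢
      rw [hk, mul_zero]
  obtain ⟨k, hk⟩ := hex
  obtain ⟨f, hf⟩ := dvd_iff_isRoot.2 hk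
  have hfm : f.Monic := by
    rw [hf] at hmon; exact (monic_X_sub_C k).of_mul_monic_left hmon
  have hfd : f.natDegree ≤ 1 := by
    have := congrArg natDegree hf
    rw [(monic_X_sub_C k).natDegree_mul hfm, natDegree_X_sub_C] at this
    omega
  have hS : aeval S (X - C k) * aeval S f = 0 := by
    rw [← map_mul, ← hf, minpoly.aeval]
  have hXk : aeval S (X - C k) = S - k • (1 : Matrix (Fin 3) (Fin 3) F) := by
    simp [Algebra.algebraMap_eq_smul_one]
  rcases (by omega : f.natDegree = 0 ∨ f.natDegree = 1) with h0 | h0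
  · rw [hfm.natDegree_eq_zero.1 h0] at hS
    rw [hXk] at hS
    refine ⟨k, 0, 0, ?_⟩
    simp only [map_one, mul_one] at hS
    rw [sub_eq_zero.1 hS]; simp
  · have hf' : f = X - C (- f.coeff 0) := by
      rw [map_neg, sub_neg_eq_add]; exact hfm.eq_X_add_C h0
    set l := - f.coeff 0
    have hXl : aeval S f = S - l • (1 : Matrix (Fin 3) (Fin 3) F) := by
      rw [hf']; simp [Algebra.algebraMap_eq_smul_one]
    rw [hXk, hXl] at hS
    have hr := Matrix.rank_add_rank_le_card_of_mul_eq_zero hS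
    simp only [Fintype.card_fin] at hr
    rcases (by omega : (S - k • (1 : Matrix (Fin 3) (Fin 3) F)).rank ≤ 1 ∨
      (S - l • (1 : Matrix (Fin 3) (Fin 3) F)).rank ≤ 1) with h1 | h1
    · obtain ⟨u, v, huv⟩ := exists_vecMulVec_of_rank_le_one _ h1
      exact ⟨k, u, v, by rw [← huv]; abel⟩
    · obtain ⟨u, v, huv⟩ := exists_vecMulVec_of_rank_le_one _ h1
      exact ⟨l, u, v, by rw [← huv]; abel⟩

lemma finrank_ker_le_two (M : Matrix (Fin 3) (Fin 3) F) (h : M ≠ 0) :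
    Module.finrank F (LinearMap.ker (Matrix.mulVecLin M)) ≤ 2 := by
  have h1 : LinearMap.ker (Matrix.mulVecLin M) < ⊤ := by
    rw [lt_top_iff_ne_top]
    intro ht
    apply h
    have := LinearMap.ker_eq_top.1 ht
    ext i j
    have := congrFun (LinearMap.congr_fun this (Pi.single j 1)) i
    simpa using this
  have := Submodule.finrank_lt_finrank_of_lt h1
  simp at this
  omega

lemma exists_cyclic (S : Matrix (Fin 3) (Fin 3) F) (hq : 3 ≤ Fintype.card F)
    (h : ¬ (minpoly F S).natDegree ≤ 2) :
    ∃ v : Fin 3 → F, LinearIndependent F ![v, S *ᵥ v, S *ᵥ (S *ᵥ v)] := by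
  classical
  have hSint : IsIntegral F S := Algebra.IsIntegral.isIntegral S
  have hmon := minpoly.monic hSint
  set m := minpoly F S with hm
  have hm0 : m ≠ 0 := hmon.ne_zero
  have hm3 : m.natDegree = 3 := by
    have h1 := natDegree_le_of_dvd (Matrix.minpoly_dvd_charpoly S) (Matrix.charpoly_monic S).ne_zero
    simp only [Matrix.charpoly_natDegree_eq_dim, Fintype.card_fin] at h1
    rw [← hm] at h1
    omega
  by_contra hcon
  push Not at hcon
  let P := (UniqueFactorizationMonoid.normalizedFactors m).toFinset
  have hPcard : P.card ≤ 3 := by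
    refine (Multiset.toFinset_card_le _).trans ?_
    have h0 := UniqueFactorizationMonoid.zero_notMem_normalizedFactors m
    have ha := UniqueFactorizationMonoid.prod_normalizedFactors hm0
    have hd := natDegree_eq_of_degree_eq (degree_eq_degree_of_associated ha)
    rw [hm3, natDegree_multiset_prod _ h0] at hd
    rw [← hd]
    have := Multiset.card_nsmul_le_sum
      (s := (UniqueFactorizationMonoid.normalizedFactors m).map natDegree) (a := 1) (by
        intro x hx
        obtain ⟨π, hπ, rfl⟩ := Multiset.mem_map.1 hx
        exact (UniqueFactorizationMonoid.irreducible_of_normalized_factor _ hπ).natDegree_pos)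
    simpa using this
  let K : F[X] → Finset (Fin 3 → F) := fun π =>
    (Finset.univ.filter (fun v => (aeval S (m / π)) *ᵥ v = 0)).erase 0
  have hK : ∀ π ∈ P, (K π).card ≤ Fintype.card F ^ 2 - 1 := by
    intro π hπ
    have hπ' := Multiset.mem_toFinset.1 hπ
    have hπd := UniqueFactorizationMonoid.dvd_of_mem_normalizedFactors hπ'
    have hπi := UniqueFactorizationMonoid.irreducible_of_normalized_factor _ hπ'
    have hmul : π * (m / π) = m := EuclideanDomain.mul_div_cancel' hπi.ne_zero hπd
    have hne : m / π ≠ 0 := by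
      intro h0; rw [h0, mul_zero] at hmul; exact hm0 hmul.symm
    have hne' : aeval S (m / π) ≠ 0 := by
      intro h0
      have h1 := natDegree_le_of_dvd (minpoly.dvd F S h0) hne
      rw [← hm] at h1
      have h2 := congrArg natDegree hmul
      rw [natDegree_mul hπi.ne_zero hne] at h2
      have := hπi.natDegree_pos
      omega
    have : (Finset.univ.filter (fun v => (aeval S (m / π)) *ᵥ v = 0)).card ≤ Fintype.card F ^ 2 := by
      have h1 := finrank_ker_le_two _ hne'
      have h2 := Module.card_eq_pow_finrank (K := F)
        (V := LinearMap.ker (Matrix.mulVecLin (aeval S (m / π))))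
      have h3 : (Finset.univ.filter (fun v => (aeval S (m / π)) *ᵥ v = 0)).card
          = Fintype.card (LinearMap.ker (Matrix.mulVecLin (aeval S (m / π)))) := by
        rw [Fintype.card_subtype]
        congr 1
        ext v
        simp
      rw [h3, h2]
      exact Nat.pow_le_pow_right (by omega) h1
    rw [Finset.card_erase_of_mem (by simp)]
    omega
  have hcover : (Finset.univ.erase (0 : Fin 3 → F)) ⊆ P.biUnion K := by
    intro v hv
    have hv0 := (Finset.mem_erase.1 hv).1
    have hli := hcon v
    rw [Fintype.not_linearIndependent_iff] at hli
    obtain ⟨c, hc, i, hi⟩ := hli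
    let f : F[X] := C (c 0) + C (c 1) * X + C (c 2) * X ^ 2
    have hf0 : f ≠ 0 := by
      intro h0
      apply hi
      have h1 := fun n => congrArg (fun g : F[X] => g.coeff n) h0
      fin_cases i
      · simpa [f, coeff_X, coeff_C] using h1 0
      · simpa [f, coeff_X, coeff_C, coeff_X_pow] using h1 1
      · simpa [f, coeff_X, coeff_C, coeff_X_pow] using h1 2
    have hfd : f.natDegree ≤ 2 := by
      simp only [f]; compute_degree
    have hfv : (aeval S f) *ᵥ v = 0 := by
      rw [← hc]
      simp [f, Fin.sum_univ_three, Algebra.algebraMap_eq_smul_one, Matrix.add_mulVec,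
        Matrix.smul_mulVec, pow_two]
    let g := EuclideanDomain.gcd f m
    have hgv : (aeval S g) *ᵥ v = 0 := by
      have : g = _ := EuclideanDomain.gcd_eq_gcd_ab f m
      rw [this, map_add, map_mul, map_mul, minpoly.aeval, zero_mul, add_zero, ← map_mul,
        mul_comm, map_mul, ← Matrix.mulVec_mulVec, hfv, Matrix.mulVec_zero]
    have hgm : g ∣ m := EuclideanDomain.gcd_dvd_right f m
    have hgf : g ∣ f := EuclideanDomain.gcd_dvd_left f m
    have hgd := (natDegree_le_of_dvd hgf hf0).trans hfd
    obtain ⟨k, hk⟩ := hgm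
    have hk0 : k ≠ 0 := by
      rintro rfl; rw [mul_zero] at hk; exact hm0 hk
    have hg0 : g ≠ 0 := by
      intro h0; rw [h0, zero_mul] at hk; exact hm0 hk
    have hku : ¬ IsUnit k := by
      intro hu
      have := congrArg natDegree hk
      rw [natDegree_mul hg0 hk0, natDegree_eq_zero_of_isUnit hu] at this
      omega
    obtain ⟨π, hπ⟩ := UniqueFactorizationMonoid.exists_mem_normalizedFactors hk0 hku
    have hπi := UniqueFactorizationMonoid.irreducible_of_normalized_factor _ hπ
    have hπm : π ∈ UniqueFactorizationMonoid.normalizedFactors m := by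
      rw [hk, UniqueFactorizationMonoid.normalizedFactors_mul hg0 hk0]
      exact Multiset.mem_add.2 (Or.inr hπ)
    obtain ⟨l, hl⟩ := UniqueFactorizationMonoid.dvd_of_mem_normalizedFactors hπ
    have hdiv : m / π = l * g := by
      have : m = π * (l * g) := by rw [hk, hl]; ring
      rw [this, mul_div_cancel_left₀ _ hπi.ne_zero]
    refine Finset.mem_biUnion.2 ⟨π, Multiset.mem_toFinset.2 hπm, ?_⟩
    simp only [K, Finset.mem_erase, Finset.mem_filter, Finset.mem_univ, true_and]
    refine ⟨hv0, ?_⟩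
    rw [hdiv, map_mul, ← Matrix.mulVec_mulVec, hgv, Matrix.mulVec_zero]
  have h1 := Finset.card_le_card hcover
  have h2 := h1.trans (Finset.card_biUnion_le_card_mul _ _ _ hK)
  rw [Finset.card_erase_of_mem (by simp)] at h2
  simp only [Finset.card_univ, Fintype.card_fun, Fintype.card_fin] at h2
  have h3 : Fintype.card F ^ 3 - 1 ≤ 3 * (Fintype.card F ^ 2 - 1) :=
    h2.trans (Nat.mul_le_mul_right _ hPcard)
  have h4 : 3 * Fintype.card F ^ 2 ≤ Fintype.card F ^ 3 := by
    rw [pow_succ _ 2, mul_comm]; exact Nat.mul_le_mul_left _ hq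
  have h5 : 1 ≤ Fintype.card F ^ 2 := Nat.one_le_pow _ _ (by omega)
  omega

lemma rho_cyclic (S : Matrix (Fin 3) (Fin 3) F) (hq : 3 ≤ Fintype.card F) (h2 : (2 : F) ≠ 0)
    (h : ¬ (minpoly F S).natDegree ≤ 2) :
    rho F S ≤ 3 ∧ (rho F S ≤ 2 ∨ (S.trace = 0 ∧ S.det = 0)) := by
  obtain ⟨v, hv⟩ := exists_cyclic S hq h
  have hspan := hv.span_eq_top_of_card_eq_finrank' (by simp)
  have hr := rho_le_of_cyclic S v h2 (by
    intro w
    have : w ∈ Submodule.span F (Set.range ![v, S *ᵥ v, S *ᵥ (S *ᵥ v)]) := by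
      rw [hspan]; trivial
    rw [Matrix.range_cons, Matrix.range_cons, Matrix.range_cons, Matrix.range_empty,
      Set.union_empty] at this
    exact this)
  constructor
  · refine hr.trans ((Submodule.finrank_le _).trans ?_)
    simp
  · by_cases hN : S.trace • (S * S) + S.det • (1 : Matrix (Fin 3) (Fin 3) F) = 0
    · right
      by_contra hcon
      apply h
      let f : F[X] := C (S.trace) * X ^ 2 + C S.det
      have hf : aeval S f = 0 := by
        rw [← hN]; simp [f, Algebra.algebraMap_eq_smul_one, pow_two]
      have hf0 : f ≠ 0 := by
        intro h0
        apply hcon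
        have h1 := fun n => congrArg (fun g : F[X] => g.coeff n) h0
        constructor
        · simpa [f, coeff_C] using h1 2
        · simpa [f, coeff_C, coeff_X_pow] using h1 0
      refine (natDegree_le_of_dvd (minpoly.dvd F S hf) hf0).trans ?_
      simp only [f]; compute_degree
    · left
      exact hr.trans (finrank_ker_le_two _ hN)

lemma eq_zero_of_dot (v x : Fin 3 → F) (j : Fin 3) (hj : v j ≠ 0) (h : v ⬝ᵥ x = 0)
    (hx : ∀ k, x (j.succAbove k) = 0) : x = 0 := by
  have hxj : x j = 0 := by
    rw [dotProduct, Fin.sum_univ_succAbove _ j] at h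
    simp only [hx, mul_zero, Finset.sum_const_zero, add_zero] at h
    exact (mul_eq_zero.1 h).resolve_left hj
  ext k
  rcases Fin.eq_self_or_eq_succAbove j k with rfl | ⟨l, rfl⟩
  · exact hxj
  · exact hx l

lemma derog_eq (a : F) (u v : Fin 3 → F) (X : Matrix (Fin 3) (Fin 3) F)
    (hX : X ∈ radical F (a • (1 : Matrix (Fin 3) (Fin 3) F) + Matrix.vecMulVec u v)) (i j : Fin 3) :
    2 * a * X i j + u i * (v ᵥ* X) j + (X *ᵥ u) i * v j = 0 := by
  have h := (mem_radical_iff _ X).1 hX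
  rw [add_mul, mul_add, Matrix.vecMulVec_mul, Matrix.mul_vecMulVec] at h
  have h1 := congrFun (congrFun h i) j
  simp [Matrix.vecMulVec_apply] at h1
  linear_combination h1

lemma derog_x (a : F) (u v : Fin 3 → F) (X : Matrix (Fin 3) (Fin 3) F)
    (hX : X ∈ radical F (a • (1 : Matrix (Fin 3) (Fin 3) F) + Matrix.vecMulVec u v)) (i : Fin 3) :
    (2 * a + v ⬝ᵥ u) * (X *ᵥ u) i = - (u ⬝ᵥ (v ᵥ* X)) * u i := by
  have h := fun j => derog_eq a u v X hX i j
  have h0 := h 0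
  have h1 := h 1
  have h2 := h 2
  have e : (X *ᵥ u) i = X i 0 * u 0 + X i 1 * u 1 + X i 2 * u 2 := by
    simp [Matrix.mulVec, dotProduct, Fin.sum_univ_three]
  generalize v ᵥ* X = y at *
  simp only [dotProduct, Fin.sum_univ_three]
  linear_combination u 0 * h0 + u 1 * h1 + u 2 * h2 + 2 * a * e

lemma derog_y (a : F) (u v : Fin 3 → F) (X : Matrix (Fin 3) (Fin 3) F)
    (hX : X ∈ radical F (a • (1 : Matrix (Fin 3) (Fin 3) F) + Matrix.vecMulVec u v)) (j : Fin 3) :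
    (2 * a + v ⬝ᵥ u) * (v ᵥ* X) j = - (v ⬝ᵥ (X *ᵥ u)) * v j := by
  have h := fun i => derog_eq a u v X hX i j
  have h0 := h 0
  have h1 := h 1
  have h2 := h 2
  have e : (v ᵥ* X) j = v 0 * X 0 j + v 1 * X 1 j + v 2 * X 2 j := by
    simp [Matrix.vecMul, dotProduct, Fin.sum_univ_three]
  generalize X *ᵥ u = x at *
  simp only [dotProduct, Fin.sum_univ_three]
  linear_combination v 0 * h0 + v 1 * h1 + v 2 * h2 + 2 * a * e

lemma rho_derog_generic (a : F) (u v : Fin 3 → F) (h2 : (2 : F) ≠ 0) (ha : a ≠ 0)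
    (hk : 2 * a + v ⬝ᵥ u ≠ 0) :
    rho F (a • (1 : Matrix (Fin 3) (Fin 3) F) + Matrix.vecMulVec u v) ≤ 1 := by
  have : radical F (a • (1 : Matrix (Fin 3) (Fin 3) F) + Matrix.vecMulVec u v)
      ≤ Submodule.span F {Matrix.vecMulVec u v} := by
    intro X hX
    rw [Submodule.mem_span_singleton]
    have hx := derog_x a u v X hX
    have hy := derog_y a u v X hX
    have h := derog_eq a u v X hX
    refine ⟨(2 * a)⁻¹ * (2 * a + v ⬝ᵥ u)⁻¹ * (v ⬝ᵥ (X *ᵥ u) + u ⬝ᵥ (v ᵥ* X)), ?_⟩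
    ext i j
    simp only [Matrix.smul_apply, Matrix.vecMulVec_apply, smul_eq_mul]
    have hxi := hx i
    have hyj := hy j
    have hij := h i j
    generalize v ⬝ᵥ (X *ᵥ u) = s at *
    generalize u ⬝ᵥ (v ᵥ* X) = t at *
    generalize 2 * a + v ⬝ᵥ u = k at *
    field_simp
    linear_combination -k * hij + u i * hyj + v j * hxi
  refine (Submodule.finrank_mono this).trans ?_
  refine (finrank_span_le_card _).trans ?_
  simp

lemma rho_derog_special (a : F) (u v : Fin 3 → F) (h2 : (2 : F) ≠ 0) (ha : a ≠ 0)
    (hk : 2 * a + v ⬝ᵥ u = 0) :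
    rho F (a • (1 : Matrix (Fin 3) (Fin 3) F) + Matrix.vecMulVec u v) ≤ 4 := by
  have hvu : v ⬝ᵥ u ≠ 0 := by
    intro h0; rw [h0, add_zero] at hk; exact (mul_ne_zero h2 ha) hk
  obtain ⟨i, hi⟩ : ∃ i, u i ≠ 0 := by
    by_contra hcon; push Not at hcon
    exact hvu (by simp [dotProduct, hcon])
  obtain ⟨j, hj⟩ : ∃ j, v j ≠ 0 := by
    by_contra hcon; push Not at hcon
    exact hvu (by simp [dotProduct, hcon])
  let L : radical F (a • (1 : Matrix (Fin 3) (Fin 3) F) + Matrix.vecMulVec u v) →ₗ[F]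
      (Fin 2 → F) × (Fin 2 → F) :=
    { toFun := fun X => (fun k => (X.1 *ᵥ u) (j.succAbove k), fun l => (v ᵥ* X.1) (i.succAbove l))
      map_add' := by intro X Y; ext <;> simp [Matrix.add_mulVec, Matrix.vecMul_add]
      map_smul' := by intro c X; ext <;> simp [Matrix.smul_mulVec, Matrix.vecMul_smul] }
  have hL : Function.Injective L := by
    rw [← LinearMap.ker_eq_bot, eq_bot_iff]
    rintro ⟨X, hX⟩ h
    have hL1 : ∀ k, (X *ᵥ u) (j.succAbove k) = 0 := fun k =>
      congrFun (congrArg Prod.fst h) k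
    have hL2 : ∀ k, (v ᵥ* X) (i.succAbove k) = 0 := fun k =>
      congrFun (congrArg Prod.snd h) k
    have hx := derog_x a u v X hX i
    have hy := derog_y a u v X hX j
    rw [hk, zero_mul] at hx hy
    have hx1 : u ⬝ᵥ (v ᵥ* X) = 0 := by
      simpa [hi] using hx.symm
    have hy1 : v ⬝ᵥ (X *ᵥ u) = 0 := by
      simpa [hj] using hy.symm
    have hx0 := eq_zero_of_dot _ _ j hj hy1 hL1
    have hy0 := eq_zero_of_dot _ _ i hi hx1 hL2
    have : X = 0 := by
      ext k l
      have := derog_eq a u v X hX k l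
      rw [hx0, hy0] at this
      simpa [h2, ha] using this
    subst this
    rfl
  have := LinearMap.finrank_le_finrank_of_injective hL
  simpa [rho] using this

lemma rho_rank_one (u v : Fin 3 → F) (h2 : (2 : F) ≠ 0) (hu : u ≠ 0) (hv : v ≠ 0) :
    rho F (Matrix.vecMulVec u v) ≤ 5 ∧ (v ⬝ᵥ u ≠ 0 → rho F (Matrix.vecMulVec u v) ≤ 4) := by
  obtain ⟨i, hi⟩ := Function.ne_iff.1 hu
  obtain ⟨j, hj⟩ := Function.ne_iff.1 hv
  simp only [Pi.zero_apply] at hi hj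
  have hE : ∀ X ∈ radical F (Matrix.vecMulVec u v), ∀ k l,
      u k * (v ᵥ* X) l + (X *ᵥ u) k * v l = 0 := by
    intro X hX k l
    have := derog_eq 0 u v X (by simpa using hX) k l
    simpa using this
  have hmain : ∀ X ∈ radical F (Matrix.vecMulVec u v), (X *ᵥ u) i = 0 →
      (∀ k l, X (j.succAbove k) (i.succAbove l) = 0) → X = 0 := by
    intro X hX hxi hsub
    have hy : ∀ l, (v ᵥ* X) l = 0 := by
      intro l
      have := hE X hX i l
      rw [hxi] at this
      simpa [hi] using this
    have hx : ∀ k, (X *ᵥ u) k = 0 := by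
      intro k
      have := hE X hX k j
      rw [hy] at this
      simpa [hj] using this
    have hrow : ∀ k l, X (j.succAbove k) l = 0 := by
      intro k l
      have : X (j.succAbove k) = 0 := by
        apply eq_zero_of_dot u _ i hi _ (hsub k)
        rw [dotProduct_comm]
        exact hx (j.succAbove k)
      exact congrFun this l
    ext k l
    have : (fun k => X k l) = 0 := by
      apply eq_zero_of_dot v _ j hj _ (fun k => hrow k l)
      exact hy l
    exact congrFun this k
  constructor
  · let L : radical F (Matrix.vecMulVec u v) →ₗ[F] (Matrix (Fin 2) (Fin 2) F) × F :=
      { toFun := fun X => (X.1.submatrix j.succAbove i.succAbove, (X.1 *ᵥ u) i)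
        map_add' := by intro X Y; ext <;> simp [Matrix.add_mulVec]
        map_smul' := by intro c X; ext <;> simp [Matrix.smul_mulVec] }
    have hL : Function.Injective L := by
      rw [← LinearMap.ker_eq_bot, eq_bot_iff]
      rintro ⟨X, hX⟩ h
      have : X = 0 := hmain X hX (congrArg Prod.snd h)
        (fun k l => congrFun (congrFun (congrArg Prod.fst h) k) l)
      subst this
      rfl
    have := LinearMap.finrank_le_finrank_of_injective hL
    simpa [rho, Module.finrank_matrix] using this
  · intro hvu
    let L : radical F (Matrix.vecMulVec u v) →ₗ[F] (Matrix (Fin 2) (Fin 2) F) :=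
      { toFun := fun X => X.1.submatrix j.succAbove i.succAbove
        map_add' := by intro X Y; ext; simp
        map_smul' := by intro c X; ext; simp }
    have hL : Function.Injective L := by
      rw [← LinearMap.ker_eq_bot, eq_bot_iff]
      rintro ⟨X, hX⟩ h
      have hx0 : (X *ᵥ u) i = 0 := by
        have hx := derog_x 0 u v X (by simpa using hX) i
        have hy := derog_y 0 u v X (by simpa using hX) j
        have hij := hE X hX i j
        have hd : v ⬝ᵥ (X *ᵥ u) = u ⬝ᵥ (v ᵥ* X) := by
          rw [Matrix.dotProduct_mulVec, dotProduct_comm]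
        rw [hd] at hy
        generalize u ⬝ᵥ (v ᵥ* X) = s at *
        generalize v ⬝ᵥ u = k at *
        have h3 : (2 * s) * (u i * v j) = 0 := by
          linear_combination -k * hij + u i * hy + v j * hx
        have hs : s = 0 := by
          simpa [h2, hi, hj] using h3
        rw [hs] at hx
        simpa [hvu] using hx
      have : X = 0 := hmain X hX hx0
        (fun k l => congrFun (congrFun h k) l)
      subst this
      rfl
    have := LinearMap.finrank_le_finrank_of_injective hL
    simpa [rho, Module.finrank_matrix] using this

lemma rho_derog (S : Matrix (Fin 3) (Fin 3) F) (h2 : (2 : F) ≠ 0) (hS : S ≠ 0) (a : F)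
    (u v : Fin 3 → F) (h : S = a • (1 : Matrix (Fin 3) (Fin 3) F) + Matrix.vecMulVec u v) :
    rho F S ≤ 3 ∨
    (rho F S ≤ 4 ∧ u ≠ 0 ∧ (S = Matrix.vecMulVec u v ∨
      S = Matrix.vecMulVec u v - ((v ⬝ᵥ u) / 2) • (1 : Matrix (Fin 3) (Fin 3) F))) ∨
    (rho F S ≤ 5 ∧ u ≠ 0 ∧ S = Matrix.vecMulVec u v ∧ v ⬝ᵥ u = 0) := by
  by_cases ha : a = 0
  · have h' : S = Matrix.vecMulVec u v := by rw [h, ha]; simp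
    have hu : u ≠ 0 := by
      rintro rfl; exact hS (by rw [h']; simp)
    have hv : v ≠ 0 := by
      rintro rfl; exact hS (by rw [h']; simp)
    have hr := rho_rank_one u v h2 hu hv
    rw [← h'] at hr
    by_cases hvu : v ⬝ᵥ u = 0
    · exact Or.inr (Or.inr ⟨hr.1, hu, h', hvu⟩)
    · exact Or.inr (Or.inl ⟨hr.2 hvu, hu, Or.inl h'⟩)
  · by_cases hk : 2 * a + v ⬝ᵥ u = 0
    · right; left
      have := rho_derog_special a u v h2 ha hk
      rw [← h] at this
      refine ⟨this, ?_, Or.inr ?_⟩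
      · rintro rfl
        simp [h2, ha] at hk
      · have : v ⬝ᵥ u / 2 = -a := by
          field_simp; linear_combination hk
        rw [this, h]; simp [add_comm]
    · left
      have := rho_derog_generic a u v h2 ha hk
      rw [← h] at this
      omega

lemma card_A2 [DecidableEq F] (h2 : (2 : F) ≠ 0) :
    (Finset.univ.filter (fun S : Matrix (Fin 3) (Fin 3) F =>
      S.det * (S.trace * e2 S - S.det) = 0)).card ≤ 6 * Fintype.card F ^ 8 := by
  classical
  let M : (Fin 8 → F) → Matrix (Fin 3) (Fin 3) F := fun y =>
    !![0, y 0, y 1; y 2, y 3, y 4; y 5, y 6, y 7]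
  let f : (Fin 8 → F) → F[X] := fun y =>
    (-(M y)).charpoly * ((2 : F)⁻¹ • (M y - (M y).trace • 1)).charpoly
  have hsub : (Finset.univ.filter (fun S : Matrix (Fin 3) (Fin 3) F =>
      S.det * (S.trace * e2 S - S.det) = 0)) ⊆
      (Finset.univ : Finset (Fin 8 → F)).biUnion (fun y =>
        (f y).roots.toFinset.image (fun t => M y + t • (1 : Matrix (Fin 3) (Fin 3) F))) := by
    intro S hS
    have hS := (Finset.mem_filter.1 hS).2
    rw [Finset.mem_biUnion]
    let y : Fin 8 → F := ![S 0 1, S 0 2, S 1 0, S 1 1 - S 0 0, S 1 2, S 2 0, S 2 1, S 2 2 - S 0 0]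
    have hMS : S = M y + S 0 0 • (1 : Matrix (Fin 3) (Fin 3) F) := by
      ext i j
      fin_cases i <;> fin_cases j <;> simp [M, y]
    refine ⟨y, Finset.mem_univ _, Finset.mem_image.2 ⟨S 0 0, ?_, hMS.symm⟩⟩
    rw [Multiset.mem_toFinset, mem_roots']
    refine ⟨((Matrix.charpoly_monic _).mul (Matrix.charpoly_monic _)).ne_zero, ?_⟩
    simp only [f, IsRoot, eval_mul, Matrix.eval_charpoly]
    generalize M y = N at *
    generalize S 0 0 = t at *
    rw [← det_trace_sub] at hS
    have h1 : Matrix.scalar (Fin 3) t - -N = S := by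
      rw [hMS, sub_neg_eq_add, add_comm, Matrix.smul_one_eq_diagonal]; rfl
    have h3 : S.trace • (1 : Matrix (Fin 3) (Fin 3) F) - S
        = (2 : F) • (Matrix.scalar (Fin 3) t - (2 : F)⁻¹ • (N - N.trace • 1)) := by
      have hs : Matrix.scalar (Fin 3) t = t • (1 : Matrix (Fin 3) (Fin 3) F) := by
        rw [Matrix.smul_one_eq_diagonal]; rfl
      have ht : S.trace = N.trace + 3 * t := by
        rw [hMS, Matrix.trace_add, Matrix.trace_smul, Matrix.trace_one]; simp [mul_comm]
      rw [hs, ht, hMS, smul_sub (2 : F), smul_smul, smul_smul, mul_inv_cancel₀ h2]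
      module
    rw [h3, Matrix.det_smul] at hS
    rw [h1]
    rcases mul_eq_zero.1 hS with h | h
    · rw [h, zero_mul]
    · rw [(mul_eq_zero.1 h).resolve_left (pow_ne_zero _ h2), mul_zero]
  refine (Finset.card_le_card hsub).trans ?_
  refine (Finset.card_biUnion_le_card_mul _ _ 6 ?_).trans ?_
  · intro y _
    refine Finset.card_image_le.trans ((Multiset.toFinset_card_le _).trans
      ((card_roots' _).trans ?_))
    simp only [f]
    rw [(Matrix.charpoly_monic _).natDegree_mul (Matrix.charpoly_monic _)]
    simp
  · simp [mul_comm]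

lemma card_A3 [DecidableEq F] :
    (Finset.univ.filter (fun S : Matrix (Fin 3) (Fin 3) F =>
      S.trace = 0 ∧ S.det = 0)).card ≤ 3 * Fintype.card F ^ 7 := by
  classical
  let M : (Fin 7 → F) → Matrix (Fin 3) (Fin 3) F := fun y =>
    !![y 0, 0, y 1; y 2, y 3, y 4; y 5, y 6, - y 0 - y 3]
  let E : Matrix (Fin 3) (Fin 3) F := !![0, 1, 0; 0, 0, 1; 1, 0, 0]
  let E' : Matrix (Fin 3) (Fin 3) F := !![0, 0, 1; 1, 0, 0; 0, 1, 0]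
  have hE : E' * E = 1 := by
    ext i j
    fin_cases i <;> fin_cases j <;> simp [E, E', Matrix.mul_apply, Fin.sum_univ_three]
  let f : (Fin 7 → F) → F[X] := fun y => (-(E' * M y)).charpoly
  have hsub : (Finset.univ.filter (fun S : Matrix (Fin 3) (Fin 3) F =>
      S.trace = 0 ∧ S.det = 0)) ⊆
      (Finset.univ : Finset (Fin 7 → F)).biUnion (fun y =>
        (f y).roots.toFinset.image (fun t => M y + t • E)) := by
    intro S hS
    obtain ⟨htr, hdet⟩ := (Finset.mem_filter.1 hS).2
    rw [Finset.mem_biUnion]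
    let y : Fin 7 → F := ![S 0 0, S 0 2, S 1 0, S 1 1, S 1 2 - S 0 1, S 2 0 - S 0 1, S 2 1]
    have hMS : S = M y + S 0 1 • E := by
      have h22 : S 2 2 = - S 0 0 - S 1 1 := by
        simp only [Matrix.trace, Fin.sum_univ_three, Matrix.diag_apply] at htr
        linear_combination htr
      ext i j
      fin_cases i <;> fin_cases j <;> simp [M, y, E, h22]
    refine ⟨y, Finset.mem_univ _, Finset.mem_image.2 ⟨S 0 1, ?_, hMS.symm⟩⟩
    rw [Multiset.mem_toFinset, mem_roots']
    refine ⟨(Matrix.charpoly_monic _).ne_zero, ?_⟩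
    simp only [f, IsRoot, Matrix.eval_charpoly]
    generalize M y = N at *
    generalize S 0 1 = t at *
    have hs : Matrix.scalar (Fin 3) t = t • (1 : Matrix (Fin 3) (Fin 3) F) := by
      rw [Matrix.smul_one_eq_diagonal]; rfl
    have h1 : Matrix.scalar (Fin 3) t - -(E' * N) = E' * S := by
      rw [hMS, mul_add, mul_smul_comm, hE, hs, sub_neg_eq_add, add_comm]
    rw [h1, Matrix.det_mul, hdet, mul_zero]
  refine (Finset.card_le_card hsub).trans ?_
  refine (Finset.card_biUnion_le_card_mul _ _ 3 ?_).trans ?_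
  · intro y _
    refine Finset.card_image_le.trans ((Multiset.toFinset_card_le _).trans
      ((card_roots' _).trans ?_))
    simp [f]
  · simp [mul_comm]

lemma normalize_vec (u v : Fin 3 → F) (hu : u ≠ 0) :
    ∃ (i : Fin 3) (z : Fin 2 → F) (c : F),
      Matrix.vecMulVec u v = Matrix.vecMulVec (i.insertNth 1 z : Fin 3 → F) (c • v) ∧
      (c • v) ⬝ᵥ (i.insertNth 1 z : Fin 3 → F) = v ⬝ᵥ u := by
  obtain ⟨i, hi⟩ := Function.ne_iff.1 hu
  simp only [Pi.zero_apply] at hi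
  have h : u = u i • (i.insertNth 1 (fun k => (u i)⁻¹ * u (i.succAbove k)) : Fin 3 → F) := by
    ext k
    rcases Fin.eq_self_or_eq_succAbove i k with rfl | ⟨l, rfl⟩
    · simp
    · simp [hi]
  refine ⟨i, fun k => (u i)⁻¹ * u (i.succAbove k), u i, ?_, ?_⟩
  · conv_lhs => rw [h]
    rw [Matrix.smul_vecMulVec, Matrix.vecMulVec_smul]
  · conv_rhs => rw [h]
    rw [smul_dotProduct, dotProduct_smul]

lemma main_bound (hodd : Odd (Fintype.card F)) [DecidableEq F] :
    ∃ A : Fin 5 → Finset (Matrix (Fin 3) (Fin 3) F),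
      (∀ p, (A p).card ≤ 6 * Fintype.card F ^ (![9, 8, 7, 5, 4] p)) ∧
      ∀ S : Matrix (Fin 3) (Fin 3) F, S ≠ 0 → ∃ p, S ∈ A p ∧ rho F S ≤ ![0, 2, 3, 4, 5] p := by
  have h2 : (2 : F) ≠ 0 := by
    intro h
    have : ringChar F = 2 := by
      apply CharP.ringChar_of_prime_eq_zero Nat.prime_two
      exact_mod_cast h
    have := FiniteField.even_card_of_char_two this
    rw [Nat.odd_iff] at hodd
    omega
  have hq : 3 ≤ Fintype.card F := by
    have := Fintype.one_lt_card (α := F)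
    obtain ⟨k, hk⟩ := hodd
    omega
  let B2 := Finset.univ.filter (fun S : Matrix (Fin 3) (Fin 3) F =>
      S.det * (S.trace * e2 S - S.det) = 0)
  let B3 := Finset.univ.filter (fun S : Matrix (Fin 3) (Fin 3) F => S.trace = 0 ∧ S.det = 0)
  let B3' : Finset (Matrix (Fin 3) (Fin 3) F) :=
    Finset.univ.image (fun x : F × (Fin 3 → F) × (Fin 3 → F) =>
      x.1 • (1 : Matrix (Fin 3) (Fin 3) F) + Matrix.vecMulVec x.2.1 x.2.2)
  let B4 : Finset (Matrix (Fin 3) (Fin 3) F) :=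
    Finset.univ.image (fun x : Fin 3 × (Fin 2 → F) × (Fin 3 → F) =>
      Matrix.vecMulVec (x.1.insertNth 1 x.2.1 : Fin 3 → F) x.2.2)
  let B4' : Finset (Matrix (Fin 3) (Fin 3) F) :=
    Finset.univ.image (fun x : Fin 3 × (Fin 2 → F) × (Fin 3 → F) =>
      Matrix.vecMulVec (x.1.insertNth 1 x.2.1 : Fin 3 → F) x.2.2 -
        ((x.2.2 ⬝ᵥ (x.1.insertNth 1 x.2.1 : Fin 3 → F)) / 2) • (1 : Matrix (Fin 3) (Fin 3) F))
  let B5 : Finset (Matrix (Fin 3) (Fin 3) F) :=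
    Finset.univ.image (fun x : Fin 3 × (Fin 2 → F) × (Fin 2 → F) =>
      Matrix.vecMulVec (x.1.insertNth 1 x.2.1 : Fin 3 → F)
        (x.1.insertNth (- ∑ k, x.2.2 k * x.2.1 k) x.2.2 : Fin 3 → F))
  refine ⟨![Finset.univ, B2, B3 ∪ B3', B4 ∪ B4', B5], ?_, ?_⟩
  · intro p
    fin_cases p
    · have h1 : Fintype.card (Matrix (Fin 3) (Fin 3) F) = Fintype.card F ^ 9 := by
        have : Fintype.card (Fin 3 → Fin 3 → F) = Fintype.card F ^ 9 := by
          simp only [Fintype.card_fun, Fintype.card_fin]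
          ring
        rw [← this]
        exact Fintype.card_congr (Equiv.refl _)
      change (Finset.univ : Finset (Matrix (Fin 3) (Fin 3) F)).card ≤ 6 * Fintype.card F ^ 9
      rw [Finset.card_univ, h1]; omega
    · exact card_A2 h2
    · change (B3 ∪ B3').card ≤ 6 * Fintype.card F ^ 7
      have h1 : B3.card ≤ 3 * Fintype.card F ^ 7 := card_A3
      have h3 : B3'.card ≤ Fintype.card F ^ 7 := by
        refine Finset.card_image_le.trans (le_of_eq ?_)
        simp only [Finset.card_univ, Fintype.card_prod, Fintype.card_fun, Fintype.card_fin]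
        ring
      have := Finset.card_union_le B3 B3'
      omega
    · change (B4 ∪ B4').card ≤ 6 * Fintype.card F ^ 5
      have h1 : B4.card ≤ 3 * Fintype.card F ^ 5 := by
        refine Finset.card_image_le.trans (le_of_eq ?_)
        simp only [Finset.card_univ, Fintype.card_prod, Fintype.card_fun, Fintype.card_fin]
        ring
      have h3 : B4'.card ≤ 3 * Fintype.card F ^ 5 := by
        refine Finset.card_image_le.trans (le_of_eq ?_)
        simp only [Finset.card_univ, Fintype.card_prod, Fintype.card_fun, Fintype.card_fin]
        ring
      have := Finset.card_union_le B4 B4'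
      omega
    · change B5.card ≤ 6 * Fintype.card F ^ 4
      have h1 : B5.card ≤ 3 * Fintype.card F ^ 4 := by
        refine Finset.card_image_le.trans (le_of_eq ?_)
        simp only [Finset.card_univ, Fintype.card_prod, Fintype.card_fun, Fintype.card_fin]
        ring
      omega
  · intro S hS
    by_cases hm : (minpoly F S).natDegree ≤ 2
    · obtain ⟨a, u, v, h⟩ := derogatory S hm
      rcases rho_derog S h2 hS a u v h with h3 | ⟨h4, hu, h4'⟩ | ⟨h5, hu, h5', hvu⟩
      · refine ⟨2, ?_, h3⟩
        exact Finset.mem_union_right _ (Finset.mem_image.2 ⟨(a, u, v), Finset.mem_univ _, h.symm⟩)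
      · refine ⟨3, ?_, h4⟩
        obtain ⟨i, z, c, e1, e2⟩ := normalize_vec u v hu
        rcases h4' with h4' | h4'
        · refine Finset.mem_union_left _ (Finset.mem_image.2
            ⟨(i, z, c • v), Finset.mem_univ _, ?_⟩)
          rw [h4', e1]
        · refine Finset.mem_union_right _ (Finset.mem_image.2
            ⟨(i, z, c • v), Finset.mem_univ _, ?_⟩)
          rw [h4', e1, ← e2]
      · refine ⟨4, ?_, h5⟩
        obtain ⟨i, z, c, e1, e2⟩ := normalize_vec u v hu
        refine Finset.mem_image.2 ⟨(i, z, i.removeNth (c • v)), Finset.mem_univ _, ?_⟩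
        rw [h5', e1]
        congr 1
        rw [hvu, dotProduct, Fin.sum_univ_succAbove _ i] at e2
        simp only [Fin.insertNth_apply_same, Fin.insertNth_apply_succAbove, mul_one] at e2
        conv_rhs => rw [← Fin.insertNth_self_removeNth i (c • v)]
        congr 1
        simp only [Fin.removeNth]
        linear_combination -e2
    · have hr := rho_cyclic S hq h2 hm
      by_cases h0 : S.det * (S.trace * e2 S - S.det) = 0
      · rcases hr.2 with h | h
        · exact ⟨1, Finset.mem_filter.2 ⟨Finset.mem_univ _, h0⟩, h⟩
        · exact ⟨2, Finset.mem_union_left _ (Finset.mem_filter.2 ⟨Finset.mem_univ _, h⟩), hr.1⟩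
      · exact ⟨0, Finset.mem_univ _, (rho_eq_zero_of S h2 h0).le⟩

end Helpers

/-- The incidence-contribution bound of Table 2: for `r ≥ 3`,
`Σ_{S ≠ 0 in M_3(F_q)} q^{r(9+ρ_S)/2} ≤ c q^{7r+4}` uniformly over odd `q`. -/
theorem rho_sum_rank_three (r : ℕ) (hr : 3 ≤ r) :
    ∃ c : ℝ, 0 < c ∧
      ∀ (F : Type) [Field F] [Fintype F] [DecidableEq F],
        Odd (Fintype.card F) →
        ∑ S ∈ Finset.univ.filter (fun S : Matrix (Fin 3) (Fin 3) F => S ≠ 0),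
            (Fintype.card F : ℝ) ^ ((r : ℝ) * (9 + (rho F S : ℝ)) / 2) ≤
          c * (Fintype.card F : ℝ) ^ (7 * r + 4) := by
  refine ⟨30, by norm_num, ?_⟩
  intro F _ _ _ hodd
  obtain ⟨A, hA, hcov⟩ := main_bound (F := F) hodd
  set q : ℝ := (Fintype.card F : ℝ) with hq
  have hq1 : 1 ≤ q := by
    rw [hq]; exact_mod_cast Fintype.card_pos
  have hq0 : 0 < q := by linarith
  let g : ℕ → ℝ := fun k => q ^ ((r : ℝ) * (9 + (k : ℝ)) / 2)
  have hg0 : ∀ k, 0 ≤ g k := fun k => Real.rpow_nonneg hq0.le _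
  have hgm : ∀ k l, k ≤ l → g k ≤ g l := by
    intro k l h
    apply Real.rpow_le_rpow_of_exponent_le hq1
    have : (k : ℝ) ≤ l := by exact_mod_cast h
    gcongr
  have hr' : (3 : ℝ) ≤ r := by exact_mod_cast hr
  have hp : ∀ p : Fin 5, ((A p).card : ℝ) * g (![0, 2, 3, 4, 5] p) ≤ 6 * q ^ (7 * r + 4) := by
    intro p
    have h1 : ((A p).card : ℝ) ≤ 6 * q ^ (![9, 8, 7, 5, 4] p : ℕ) := by
      rw [hq]; exact_mod_cast hA p
    refine (mul_le_mul_of_nonneg_right h1 (hg0 _)).trans ?_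
    rw [mul_assoc]
    apply mul_le_mul_of_nonneg_left _ (by norm_num)
    simp only [g]
    rw [← Real.rpow_natCast, ← Real.rpow_natCast, ← Real.rpow_add hq0]
    apply Real.rpow_le_rpow_of_exponent_le hq1
    push_cast
    fin_cases p <;> simp <;> linarith
  calc ∑ S ∈ Finset.univ.filter (fun S : Matrix (Fin 3) (Fin 3) F => S ≠ 0),
            q ^ ((r : ℝ) * (9 + (rho F S : ℝ)) / 2)
      ≤ ∑ S ∈ Finset.univ.filter (fun S : Matrix (Fin 3) (Fin 3) F => S ≠ 0),
          ∑ p : Fin 5, (if S ∈ A p then g (![0, 2, 3, 4, 5] p) else 0) := by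
        apply Finset.sum_le_sum
        intro S hS
        obtain ⟨p, hpS, hpr⟩ := hcov S (Finset.mem_filter.1 hS).2
        have h1 := Finset.single_le_sum
          (f := fun p : Fin 5 => if S ∈ A p then g (![0, 2, 3, 4, 5] p) else 0)
          (fun p _ => by
            split_ifs
            · exact hg0 _
            · exact le_rfl) (Finset.mem_univ p)
        simp only [hpS, if_true] at h1
        exact (hgm _ _ hpr).trans h1
    _ ≤ ∑ S : Matrix (Fin 3) (Fin 3) F,
          ∑ p : Fin 5, (if S ∈ A p then g (![0, 2, 3, 4, 5] p) else 0) := by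
        apply Finset.sum_le_sum_of_subset_of_nonneg (Finset.filter_subset _ _)
        intro S _ _
        apply Finset.sum_nonneg
        intro p _
        split_ifs
        · exact hg0 _
        · exact le_rfl
    _ = ∑ p : Fin 5, ((A p).card : ℝ) * g (![0, 2, 3, 4, 5] p) := by
        rw [Finset.sum_comm]
        apply Finset.sum_congr rfl
        intro p _
        rw [Finset.sum_ite_mem, Finset.univ_inter, Finset.sum_const, nsmul_eq_mul]
    _ ≤ ∑ p : Fin 5, 6 * q ^ (7 * r + 4) := Finset.sum_le_sum (fun p _ => hp p)
    _ = 30 * q ^ (7 * r + 4) := by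
        rw [Finset.sum_const]; simp; ring
end
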